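/- For every k ∈ ℕ, every p ≤ p_k = 1 − (1/2)^{1/(k+1)} and every q ∈ [0,1], the percolation function of anisotropic bond percolation on the slab S^k satisfies θ(p,q) = 0. -/

import Mathlib

open MeasureTheory Set
open scoped ENNReal

namespace AnisoSlab

/-! ### A concrete construction of countable products of Bernoulli measures

The product Bernoulli measure on `ι → Bool` (each coordinate `i` open with
probability `P i`, independently) is realized as the pushforward of Lebesgue
measure on `[0,1)`: the binary digits of a uniform sample are i.i.d. fair
coins; regrouping them along a pairing function yields countably many
independent uniform samples, and comparing the `i`-th sample with `P i`
yields the desired independent Bernoulli coordinates. -/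

/-- The `n`-th binary digit of `x` (digits after the binary point). -/
noncomputable def binDigit (n : ℕ) (x : ℝ) : Bool :=
  decide (⌊x * 2 ^ (n + 1)⌋ % 2 = 1)

/-- Countably many independent uniform-`[0,1]` samples extracted from a single
uniform sample `x` on `[0,1)`, by regrouping its binary digits. -/
noncomputable def unifSample (i : ℕ) (x : ℝ) : ℝ :=
  ∑' n : ℕ, if binDigit (Nat.pair i n) x then ((2 : ℝ) ^ (n + 1))⁻¹ else 0

/-- The product Bernoulli measure on `ι → Bool`, coordinate `i` being `true`
with probability `P i`, independently over `i`. -/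
noncomputable def bernoulliProduct {ι : Type*} [Encodable ι] (P : ι → ℝ) :
    Measure (ι → Bool) :=
  Measure.map (fun x i => decide (unifSample (Encodable.encode i) x < P i))
    (volume.restrict (Set.Ico (0 : ℝ) 1))

/-! ### The slab `S^k` and anisotropic bond percolation on it -/

/-- Ambient vertices: `ℤ³`; the slab `S^k` uses those with third coordinate in `{0, …, k}`. -/
abbrev Vtx : Type := ℤ × ℤ × ℤ

/-- The three unit coordinate vectors. -/
def dvec : Fin 3 → Vtx
  | 0 => (1, 0, 0)
  | 1 => (0, 1, 0)
  | 2 => (0, 0, 1)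

/-- A bond is indexed by its lower endpoint `v` and a direction `i`; it joins
`v` to `v + dvec i`. Directions `0, 1` give radial (horizontal) bonds, and
direction `2` gives axial (vertical) bonds. -/
abbrev EdgeIdx : Type := Vtx × Fin 3

/-- A percolation configuration: each bond is open (`true`) or closed (`false`). -/
abbrev Config : Type := EdgeIdx → Bool

/-- `v` is a vertex of the slab `S^k`. -/
def InSlab (k : ℕ) (v : Vtx) : Prop := 0 ≤ v.2.2 ∧ v.2.2 ≤ k

/-- `(v, i)` is a bond of the slab `S^k` (both endpoints lie in the slab). -/
def IsEdge (k : ℕ) (e : EdgeIdx) : Prop := InSlab k e.1 ∧ InSlab k (e.1 + dvec e.2)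

/-- The measure `P_{p,q}` on configurations of `S^k`: each radial (horizontal)
bond is open with probability `p` and each axial (vertical) bond is open with
probability `q`, independently. -/
noncomputable def slabMeasure (k : ℕ) (p q : ℝ) : Measure Config :=
  bernoulliProduct (fun e => if e.2 = 2 then q else p)

/-- `x` and `y` are joined by an open bond of `S^k` in the configuration `ω`. -/
def OpenAdj (k : ℕ) (ω : Config) (x y : Vtx) : Prop :=
  ∃ i : Fin 3,
    (y = x + dvec i ∧ IsEdge k (x, i) ∧ ω (x, i) = true) ∨
    (x = y + dvec i ∧ IsEdge k (y, i) ∧ ω (y, i) = true)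

/-- The open cluster of the vertex `x` in the configuration `ω`. -/
def cluster (k : ℕ) (ω : Config) (x : Vtx) : Set Vtx :=
  {y | Relation.ReflTransGen (OpenAdj k ω) x y}

/-- The percolation function `θ(p,q) = P_{p,q}(0 ↔ ∞)`. -/
noncomputable def theta (k : ℕ) (p q : ℝ) : ℝ≥0∞ :=
  slabMeasure k p q {ω | (cluster k ω 0).Infinite}

/-- `p_k = 1 - (1/2)^{1/(k+1)}`, the horizontal critical value at `q = 1`. -/
noncomputable def pCrit (k : ℕ) : ℝ := 1 - (1 / 2 : ℝ) ^ ((1 : ℝ) / (k + 1))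

/-- The critical curve `q_c(p) = sup {q ∈ [0,1] : θ(p,q) = 0}`. -/
noncomputable def qc (k : ℕ) (p : ℝ) : ℝ :=
  sSup {q : ℝ | q ∈ Set.Icc (0 : ℝ) 1 ∧ theta k p q = 0}

/-- The critical curve `p_c(q) = sup {p ∈ [0,1] : θ(p,q) = 0}`. -/
noncomputable def pc (k : ℕ) (q : ℝ) : ℝ :=
  sSup {p : ℝ | p ∈ Set.Icc (0 : ℝ) 1 ∧ theta k p q = 0}


/-! ## Part 1: the measure -/

/-- The fair coin. -/
noncomputable def coin : Measure Bool :=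
  (2⁻¹ : ℝ≥0∞) • Measure.dirac true + (2⁻¹ : ℝ≥0∞) • Measure.dirac false

lemma coin_singleton (b : Bool) : coin {b} = 2⁻¹ := by
  cases b <;> simp [coin]

instance : IsProbabilityMeasure coin := by
  constructor
  simp [coin, ENNReal.inv_two_add_inv_two]

lemma eq_coin {ν : Measure Bool} [IsProbabilityMeasure ν] (h : ν {false} = 2⁻¹) : ν = coin := by
  have h1 : ν {true} = 2⁻¹ := by
    have := measure_compl (μ := ν) (s := {false}) (by measurability) (by simp)
    rw [h, measure_univ, ENNReal.one_sub_inv_two] at this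
    rw [← this]; congr 1; ext b; cases b <;> simp
  refine Measure.ext_of_singleton fun b => ?_
  rw [coin_singleton]; cases b <;> assumption

lemma infinitePi_map_comp_inj {ι κ X : Type*} [MeasurableSpace X] (μ : Measure X)
    [IsProbabilityMeasure μ] (f : ι → κ) (hf : Function.Injective f) :
    (Measure.infinitePi (fun _ : κ => μ)).map (fun x i => x (f i)) =
      Measure.infinitePi (fun _ : ι => μ) := by
  classical
  refine Measure.eq_infinitePi _ fun s t ht => ?_
  rw [Measure.map_apply (by fun_prop) (.pi s.countable_toSet fun _ _ ↦ ht _)]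
  rcases isEmpty_or_nonempty ι with hι | hι
  · have : s = ∅ := Finset.eq_empty_of_isEmpty s
    subst this; simp
  have : (fun (x : κ → X) i => x (f i)) ⁻¹' ((s : Set ι).pi t) =
      Set.pi (s.image f : Finset κ) (fun j => t (Function.invFun f j)) := by
    ext x
    simp [Set.mem_pi, Function.leftInverse_invFun hf _]
  rw [this, Measure.infinitePi_pi _ (fun i _ => ht _), Finset.prod_image hf.injOn]
  simp [Function.leftInverse_invFun hf _]

/-- integer with given binary digits -/
def digInt (b : ℕ → Bool) : ℕ → ℤ
  | 0 => 0
  | n + 1 => 2 * digInt b n + (if b n then 1 else 0)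

lemma digInt_nonneg (b : ℕ → Bool) (n : ℕ) : 0 ≤ digInt b n := by
  induction n with
  | zero => simp [digInt]
  | succ n ih => simp only [digInt]; split_ifs <;> omega

lemma digInt_lt (b : ℕ → Bool) (n : ℕ) : digInt b n + 1 ≤ 2 ^ n := by
  induction n with
  | zero => simp [digInt]
  | succ n ih => simp only [digInt, pow_succ]; split_ifs <;> omega

lemma floor_half (x : ℝ) (n : ℕ) : ⌊x * 2 ^ (n + 1)⌋ / 2 = ⌊x * 2 ^ n⌋ := by
  have := Int.floor_div_natCast (x * 2 ^ (n + 1)) 2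
  push_cast at this
  rw [← this]; congr 1; rw [pow_succ]; ring

lemma digits_iff (b : ℕ → Bool) (x : ℝ) (hx : x ∈ Ico (0 : ℝ) 1) (n : ℕ) :
    (∀ i < n, binDigit i x = b i) ↔ ⌊x * 2 ^ n⌋ = digInt b n := by
  induction n with
  | zero => simpa [digInt, Int.floor_eq_zero_iff] using hx
  | succ n ih =>
    have h2 := floor_half x n
    have : (∀ i < n + 1, binDigit i x = b i) ↔ ((∀ i < n, binDigit i x = b i) ∧
        binDigit n x = b n) := by
      constructor
      · intro h; exact ⟨fun i hi => h i (by omega), h n (by omega)⟩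
      · rintro ⟨h, h'⟩ i hi
        rcases Nat.lt_succ_iff_lt_or_eq.1 hi with h1 | rfl
        · exact h i h1
        · exact h'
    rw [this, ih, ← h2]
    simp only [digInt, binDigit]
    cases b n <;> simp <;> omega

lemma digInt_binDigit (x : ℝ) (hx : x ∈ Ico (0 : ℝ) 1) (n : ℕ) :
    digInt (fun i => binDigit i x) n = ⌊x * 2 ^ n⌋ :=
  ((digits_iff _ x hx n).1 (fun _ _ => rfl)).symm

lemma measurable_binDigit (n : ℕ) : Measurable (binDigit n) := by
  have : binDigit n = (fun z : ℤ => decide (z % 2 = 1)) ∘ (fun x : ℝ => ⌊x * 2 ^ (n + 1)⌋) := rfl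
  rw [this]
  exact (measurable_from_top).comp (Int.measurable_floor.comp (by fun_prop))

/-- Lebesgue measure on the unit interval. -/
noncomputable def leb : Measure ℝ := volume.restrict (Set.Ico (0 : ℝ) 1)

instance : IsProbabilityMeasure leb := by
  constructor; simp [leb]

lemma leb_digits (b : ℕ → Bool) (n : ℕ) :
    leb {x | ∀ i < n, binDigit i x = b i} = 2⁻¹ ^ n := by
  have hm : MeasurableSet {x | ∀ i < n, binDigit i x = b i} := by
    have : {x | ∀ i < n, binDigit i x = b i} = ⋂ i, ⋂ (_ : i < n), {x | binDigit i x = b i} := by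
      ext; simp
    rw [this]
    refine MeasurableSet.iInter fun i => MeasurableSet.iInter fun _ => ?_
    exact measurable_binDigit i (measurableSet_singleton (b i))
  rw [leb, Measure.restrict_apply hm]
  have h2 : (0 : ℝ) < 2 ^ n := by positivity
  have : {x | ∀ i < n, binDigit i x = b i} ∩ Ico (0 : ℝ) 1 =
      Ico ((digInt b n : ℝ) / 2 ^ n) ((digInt b n + 1 : ℝ) / 2 ^ n) := by
    ext x
    constructor
    · rintro ⟨h, hx⟩
      have := (digits_iff b x hx n).1 h
      rw [Int.floor_eq_iff] at this
      exact ⟨(div_le_iff₀ h2).2 this.1, (lt_div_iff₀ h2).2 this.2⟩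
    · rintro ⟨h, h'⟩
      have hx : x ∈ Ico (0 : ℝ) 1 := by
        refine ⟨le_trans (div_nonneg (by exact_mod_cast digInt_nonneg b n) h2.le) h,
          lt_of_lt_of_le h' ((div_le_one h2).2 (by exact_mod_cast digInt_lt b n))⟩
      refine ⟨(digits_iff b x hx n).2 ?_, hx⟩
      rw [Int.floor_eq_iff]
      exact ⟨(div_le_iff₀ h2).1 h, (lt_div_iff₀ h2).1 h'⟩
  rw [this, Real.volume_Ico]
  have : ((digInt b n + 1 : ℝ) / 2 ^ n) - ((digInt b n : ℝ) / 2 ^ n) = 2⁻¹ ^ n := by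
    rw [inv_pow]; field_simp; ring
  rw [this, ENNReal.ofReal_pow (by norm_num), ENNReal.ofReal_inv_of_pos (by norm_num)]
  simp

lemma map_digits : leb.map (fun x n => binDigit n x) = Measure.infinitePi (fun _ : ℕ => coin) := by
  have hmeas : Measurable (fun (x : ℝ) (n : ℕ) => binDigit n x) :=
    measurable_pi_iff.2 measurable_binDigit
  have key : ∀ n, (leb.map (fun x n => binDigit n x)).map (Finset.range n).restrict =
      (Measure.infinitePi (fun _ : ℕ => coin)).map (Finset.range n).restrict := by
    intro n
    rw [Measure.infinitePi_map_restrict]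
    refine Measure.ext_of_singleton fun a => ?_
    rw [Measure.map_map (by fun_prop) hmeas,
      Measure.map_apply ((Finset.measurable_restrict _).comp hmeas) (by measurability),
      Measure.pi_singleton]
    simp only [coin_singleton, Finset.prod_const, Finset.card_univ, Fintype.card_coe,
      Finset.card_range]
    rw [← leb_digits (fun i => if h : i < n then a ⟨i, Finset.mem_range.2 h⟩ else false) n]
    congr 1
    ext x
    simp only [mem_preimage, Function.comp, mem_singleton_iff, mem_ofPred_eq, funext_iff,
      Subtype.forall, Finset.mem_range, Finset.restrict]
    refine forall_congr' fun i => forall_congr' fun hi => ?_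
    simp [hi]
  refine Measure.eq_infinitePi _ fun s t ht => ?_
  obtain ⟨n, hn⟩ : ∃ n, s ⊆ Finset.range n := ⟨_, Finset.subset_range_sup_succ s⟩
  have e : (s : Set ℕ).pi t = (Finset.range n).restrict (π := fun _ => Bool) ⁻¹'
      {y | ∀ i (hi : i ∈ s), y ⟨i, hn hi⟩ ∈ t i} := by
    ext x; simp [Set.mem_pi]
  rw [← Measure.infinitePi_pi (fun _ : ℕ => coin) (fun i _ => ht i), e,
    ← Measure.map_apply (by fun_prop) (Set.toFinite _).measurableSet,
    ← Measure.map_apply (by fun_prop) (Set.toFinite _).measurableSet, key]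

/-- binary expansion -/
noncomputable def binSum (b : ℕ → Bool) : ℝ :=
  ∑' n : ℕ, if b n then ((2 : ℝ) ^ (n + 1))⁻¹ else 0

lemma unifSample_eq (i : ℕ) (x : ℝ) :
    unifSample i x = binSum (fun n => binDigit (Nat.pair i n) x) := rfl

lemma summable_bin (b : ℕ → Bool) :
    Summable (fun n => if b n then ((2 : ℝ) ^ (n + 1))⁻¹ else 0) := by
  refine Summable.of_nonneg_of_le (fun n => ?_) (fun n => ?_)
    (summable_geometric_two)
  · split_ifs <;> positivity
  · split_ifs
    · rw [one_div, inv_pow]; gcongr <;> simp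
    · positivity

lemma sum_bin (b : ℕ → Bool) (n : ℕ) :
    ∑ i ∈ Finset.range n, (if b i then ((2 : ℝ) ^ (i + 1))⁻¹ else 0) = digInt b n / 2 ^ n := by
  induction n with
  | zero => simp [digInt]
  | succ n ih =>
    rw [Finset.sum_range_succ, ih]
    simp only [digInt]
    split_ifs <;> push_cast <;> field_simp <;> ring

lemma binSum_binDigit (x : ℝ) (hx : x ∈ Ico (0 : ℝ) 1) : binSum (fun n => binDigit n x) = x := by
  have h := (summable_bin (fun n => binDigit n x)).hasSum.tendsto_sum_nat
  refine tendsto_nhds_unique h ?_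
  simp only [sum_bin, digInt_binDigit x hx]
  have h1 : Filter.Tendsto (fun n : ℕ => (⌊x * 2 ^ n⌋ : ℝ) / 2 ^ n) Filter.atTop (nhds x) := by
    have := (tendsto_nat_floor_mul_div_atTop (R := ℝ) hx.1).comp
      (tendsto_pow_atTop_atTop_of_one_lt (r := (2 : ℝ)) (by norm_num))
    refine this.congr fun n => ?_
    simp only [Function.comp]
    rw [natCast_floor_eq_intCast_floor (by have := hx.1; positivity)]
  exact h1

lemma measurable_binSum : Measurable binSum := by
  have h : Filter.Tendsto (fun n b => (digInt b n : ℝ) / 2 ^ n) Filter.atTop (nhds binSum) := by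
    rw [tendsto_pi_nhds]
    intro b
    have h := (summable_bin b).hasSum.tendsto_sum_nat
    simp only [sum_bin] at h
    exact h
  refine measurable_of_tendsto_metrizable (fun n => ?_) h
  simp only [← sum_bin]
  refine Finset.measurable_sum _ fun i _ => ?_
  refine Measurable.ite ?_ measurable_const measurable_const
  exact measurableSet_eq_fun (measurable_pi_apply i) measurable_const

lemma map_binSum : (Measure.infinitePi (fun _ : ℕ => coin)).map binSum = leb := by
  have hmeas : Measurable (fun (x : ℝ) (n : ℕ) => binDigit n x) :=
    measurable_pi_iff.2 measurable_binDigit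
  rw [← map_digits, Measure.map_map measurable_binSum hmeas]
  conv_rhs => rw [← Measure.map_id (μ := leb)]
  refine Measure.map_congr ?_
  rw [leb, Filter.EventuallyEq, ae_restrict_iff' measurableSet_Ico]
  exact Filter.Eventually.of_forall fun x hx => binSum_binDigit x hx

lemma measurable_unifSample (i : ℕ) : Measurable (unifSample i) := by
  have : unifSample i = binSum ∘ (fun x n => binDigit (Nat.pair i n) x) := rfl
  rw [this]
  exact measurable_binSum.comp (measurable_pi_iff.2 fun n => measurable_binDigit _)

lemma map_unifSample :
    leb.map (fun x i => unifSample i x) = Measure.infinitePi (fun _ : ℕ => leb) := by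
  have hmeas : Measurable (fun (x : ℝ) (n : ℕ) => binDigit n x) :=
    measurable_pi_iff.2 measurable_binDigit
  have h1 := infinitePi_map_comp_inj coin (fun z : ℕ × ℕ => Nat.pair z.1 z.2)
    (fun a b h => by
      have := Nat.pair_eq_pair.1 h
      exact Prod.ext this.1 this.2)
  have h2 := Measure.infinitePi_map_curry (fun (_ _ : ℕ) => coin)
  have h3 := Measure.infinitePi_map_pi (fun _ : ℕ => Measure.infinitePi (fun _ : ℕ => coin))
    (f := fun _ => binSum) (fun _ => measurable_binSum)
  rw [map_binSum] at h3
  have hm3 : Measurable (fun (x : ℕ → ℕ → Bool) i => binSum (x i)) :=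
    measurable_pi_iff.2 fun i => measurable_binSum.comp (measurable_pi_apply i)
  rw [← h3, ← h2, ← h1, ← map_digits, Measure.map_map (by fun_prop) hmeas,
    Measure.map_map hm3 (by fun_prop), Measure.map_map (hm3.comp (by fun_prop))
      (Measurable.comp (by fun_prop) hmeas)]
  rfl


/-- Vertices of the square lattice. -/
abbrev V2 : Type := ℤ × ℤ

/-- Edges of the square lattice: `(v, false)` is the horizontal edge to the right of `v`,
`(v, true)` is the vertical edge above `v`. -/
abbrev E2 : Type := V2 × Bool

/-- Configurations on the square lattice. -/
abbrev Cfg : Type := E2 → Bool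

/-- Fair percolation measure on the square lattice. -/
noncomputable def mu : Measure Cfg := Measure.infinitePi (fun _ : E2 => coin)

instance : IsProbabilityMeasure mu := by unfold mu; infer_instance

/-- The copy at height `z` of an edge of the square lattice. -/
def liftEdge (a : E2 × ℕ) : EdgeIdx :=
  ((a.1.1.1, a.1.1.2, (a.2 : ℤ)), if a.1.2 then 1 else 0)

lemma liftEdge_injective : Function.Injective liftEdge := by
  rintro ⟨⟨⟨x, y⟩, d⟩, z⟩ ⟨⟨⟨x', y'⟩, d'⟩, z'⟩ h
  simp only [liftEdge, Prod.mk.injEq, Nat.cast_inj] at h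
  obtain ⟨⟨rfl, rfl, rfl⟩, h⟩ := h
  cases d <;> cases d' <;> simp_all

/-- The configuration on the square lattice obtained by collapsing columns at threshold `c`. -/
noncomputable def collapsed (k : ℕ) (c : ℝ) (x : ℝ) : Cfg := fun e =>
  decide (∃ z : Fin (k + 1), unifSample (Encodable.encode (liftEdge (e, (z : ℕ)))) x < c)

lemma measurable_exists_lt (k : ℕ) (c : ℝ) :
    Measurable (fun u : Fin (k + 1) → ℝ => decide (∃ z, u z < c)) := by
  refine measurable_to_bool ?_
  have : (fun u : Fin (k + 1) → ℝ => decide (∃ z, u z < c)) ⁻¹' {true} =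
      ⋃ z, {u | u z < c} := by
    ext; simp
  rw [this]
  exact MeasurableSet.iUnion fun z => measurableSet_lt (measurable_pi_apply z) measurable_const

lemma leb_not_lt (c : ℝ) (h0 : 0 ≤ c) (h1 : c ≤ 1) :
    leb {u | ¬ u < c} = ENNReal.ofReal (1 - c) := by
  have : {u : ℝ | ¬ u < c} = Ici c := by ext; simp
  rw [this, leb, Measure.restrict_apply measurableSet_Ici]
  have : Ici c ∩ Ico 0 1 = Ico c 1 := by
    ext u; simp only [mem_inter_iff, mem_Ici, mem_Ico]
    constructor
    · rintro ⟨a, b, d⟩; exact ⟨a, d⟩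
    · rintro ⟨a, b⟩; exact ⟨a, h0.trans a, b⟩
  rw [this, Real.volume_Ico]

lemma pCrit_spec (k : ℕ) : (1 - pCrit k) ^ (k + 1) = 1 / 2 := by
  have h : (1 - pCrit k) = (1 / 2 : ℝ) ^ ((1 : ℝ) / (k + 1)) := by simp [pCrit]
  rw [h, ← Real.rpow_natCast, ← Real.rpow_mul (by norm_num)]
  have : (1 : ℝ) / (k + 1) * ((k + 1 : ℕ) : ℝ) = 1 := by
    push_cast; field_simp
  rw [this, Real.rpow_one]

lemma pCrit_nonneg (k : ℕ) : 0 ≤ pCrit k := by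
  have : (1 / 2 : ℝ) ^ ((1 : ℝ) / (k + 1)) ≤ 1 :=
    Real.rpow_le_one (by norm_num) (by norm_num) (by positivity)
  unfold pCrit; linarith

lemma pCrit_le_one (k : ℕ) : pCrit k ≤ 1 := by
  have : (0 : ℝ) ≤ (1 / 2 : ℝ) ^ ((1 : ℝ) / (k + 1)) := by positivity
  unfold pCrit; linarith

lemma map_exists_lt (k : ℕ) :
    (Measure.infinitePi (fun _ : Fin (k + 1) => leb)).map
      (fun u => decide (∃ z, u z < pCrit k)) = coin := by
  have := Measure.isProbabilityMeasure_map
    (μ := Measure.infinitePi (fun _ : Fin (k + 1) => leb))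
    (measurable_exists_lt k (pCrit k)).aemeasurable
  refine eq_coin ?_
  rw [Measure.map_apply (measurable_exists_lt k _) (by measurability)]
  have : (fun u : Fin (k + 1) → ℝ => decide (∃ z, u z < pCrit k)) ⁻¹' {false} =
      Set.pi (Finset.univ : Finset (Fin (k + 1))) (fun _ => {u | ¬ u < pCrit k}) := by
    ext; simp
  rw [this, Measure.infinitePi_pi]
  · simp only [leb_not_lt _ (pCrit_nonneg k) (pCrit_le_one k), Finset.prod_const,
      Finset.card_univ, Fintype.card_fin]
    rw [← ENNReal.ofReal_pow (by have := pCrit_le_one k; linarith), pCrit_spec]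
    rw [one_div, ENNReal.ofReal_inv_of_pos (by norm_num)]; simp
  · intro i _
    exact (measurableSet_lt measurable_id measurable_const).compl

lemma measurable_collapsed (k : ℕ) (c : ℝ) : Measurable (collapsed k c) :=
  measurable_pi_iff.2 fun e => (measurable_exists_lt k c).comp
    (measurable_pi_iff.2 fun _ => measurable_unifSample _)

lemma map_collapsed (k : ℕ) : leb.map (collapsed k (pCrit k)) = mu := by
  have hmeas : Measurable (fun (x : ℝ) (n : ℕ) => unifSample n x) :=
    measurable_pi_iff.2 measurable_unifSample
  have h1 := infinitePi_map_comp_inj leb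
    (fun a : E2 × Fin (k + 1) => Encodable.encode (liftEdge (a.1, (a.2 : ℕ))))
    (fun a b h => by
      have := liftEdge_injective (Encodable.encode_injective h)
      simp only [Prod.mk.injEq] at this
      exact Prod.ext this.1 (Fin.ext this.2))
  have h2 := Measure.infinitePi_map_curry (fun (_ : E2) (_ : Fin (k + 1)) => leb)
  have h3 := Measure.infinitePi_map_pi
    (fun _ : E2 => Measure.infinitePi (fun _ : Fin (k + 1) => leb))
    (f := fun _ u => decide (∃ z, u z < pCrit k)) (fun _ => measurable_exists_lt k _)
  rw [map_exists_lt] at h3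
  have hm3 : Measurable (fun (x : E2 → Fin (k + 1) → ℝ) i => decide (∃ z, x i z < pCrit k)) :=
    measurable_pi_iff.2 fun i => (measurable_exists_lt k _).comp (measurable_pi_apply i)
  rw [mu, ← h3, ← h2, ← h1, ← map_unifSample, Measure.map_map (by fun_prop) hmeas,
    Measure.map_map hm3 (by fun_prop), Measure.map_map (hm3.comp (by fun_prop))
      (Measurable.comp (by fun_prop) hmeas)]
  rfl

/-! ## Part 2: counting trifurcations -/

/-- Connection by `G`-edges inside `S`. -/
def ConnIn {V : Type*} (G : V → V → Prop) (S : Set V) : V → V → Prop :=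
  Relation.ReflTransGen (fun a b => G a b ∧ a ∈ S ∧ b ∈ S)

namespace ConnIn

variable {V : Type*} {G : V → V → Prop} {S T : Set V}

lemma symm (hG : ∀ a b, G a b → G b a) {a b : V} (h : ConnIn G S a b) : ConnIn G S b a := by
  induction h with
  | refl => exact Relation.ReflTransGen.refl
  | tail _ h ih => exact Relation.ReflTransGen.head ⟨hG _ _ h.1, h.2.2, h.2.1⟩ ih

lemma trans {a b c : V} (h : ConnIn G S a b) (h' : ConnIn G S b c) : ConnIn G S a c :=
  Relation.ReflTransGen.trans h h'

lemma mono {G' : V → V → Prop} (hG : ∀ a b, a ∈ S → b ∈ S → G a b → G' a b) (hST : S ⊆ T) {a b : V}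
    (h : ConnIn G S a b) : ConnIn G' T a b := by
  induction h with
  | refl => exact Relation.ReflTransGen.refl
  | tail _ h ih =>
    exact Relation.ReflTransGen.tail ih ⟨hG _ _ h.2.1 h.2.2 h.1, hST h.2.1, hST h.2.2⟩

lemma single {a b : V} (h : G a b) (ha : a ∈ S) (hb : b ∈ S) : ConnIn G S a b :=
  Relation.ReflTransGen.single ⟨h, ha, hb⟩

lemma mem {a b : V} (h : ConnIn G S a b) (ha : a ∈ S) : b ∈ S := by
  cases h with
  | refl => exact ha
  | tail _ h => exact h.2.2

/-- Along a path in `S` starting from `a`, either we stay outside `B` or we have a first hit. -/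
lemma first_hit (B : Set V) {a b : V} (h : ConnIn G S a b) (ha : a ∉ B) :
    ConnIn G (S \ B) a b ∧ b ∉ B ∨
      ∃ w u, ConnIn G (S \ B) a w ∧ w ∉ B ∧ u ∈ B ∧ u ∈ S ∧ w ∈ S ∧ G w u := by
  induction h with
  | refl => exact Or.inl ⟨Relation.ReflTransGen.refl, ha⟩
  | @tail b c _ hbc ih =>
    rcases ih with ⟨h1, h2⟩ | h
    · by_cases hc : c ∈ B
      · exact Or.inr ⟨b, c, h1, h2, hc, hbc.2.2, hbc.2.1, hbc.1⟩
      · exact Or.inl ⟨h1.trans (single hbc.1 ⟨hbc.2.1, h2⟩ ⟨hbc.2.2, hc⟩), hc⟩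
    · exact Or.inr h

end ConnIn

/-- `z` is attached to `B` by a path outside of `B`. -/
def Attached {V : Type*} (G : V → V → Prop) (B : Set V) (z : V) : Prop :=
  ∃ w u, ConnIn G Bᶜ z w ∧ w ∉ B ∧ u ∈ B ∧ G w u

/-- Branch data for a trifurcation. -/
structure Branch {V : Type*} (G : V → V → Prop) (bd : Set V) (rk : V → ℕ) (B : Set V)
    (r s v : V) : Prop where
  hr : r ∈ bd
  hs : s ∈ bd
  hv : v ∈ bd
  ar : Attached G B r
  as : Attached G B s
  av : Attached G B v
  rB : r ∉ B
  sB : s ∉ B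
  vB : v ∉ B
  rs : ¬ ConnIn G Bᶜ r s
  rv : ¬ ConnIn G Bᶜ r v
  sv : ¬ ConnIn G Bᶜ s v
  rlt : rk r < rk v
  slt : rk s < rk v
  vmin : ∀ t ∈ bd, ConnIn G Bᶜ v t → rk v ≤ rk t

section count
variable {V : Type*} {G : V → V → Prop} {bd : Set V} {rk : V → ℕ}

lemma min_rep (hG : ∀ a b, G a b → G b a)
    (B : Set V) (z : V) (hz : z ∈ bd) (hzB : z ∉ B) (ha : Attached G B z) :
    ∃ t ∈ bd, t ∉ B ∧ Attached G B t ∧ ConnIn G Bᶜ z t ∧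
      ∀ t' ∈ bd, ConnIn G Bᶜ t t' → rk t ≤ rk t' := by
  classical
  have hex : ∃ n, ∃ t ∈ bd, ConnIn G Bᶜ z t ∧ rk t = n :=
    ⟨_, z, hz, Relation.ReflTransGen.refl, rfl⟩
  obtain ⟨t, ht, hc, hn⟩ := Nat.find_spec hex
  refine ⟨t, ht, hc.mem hzB, ?_, hc, ?_⟩
  · obtain ⟨w, u, h1, h2⟩ := ha
    exact ⟨w, u, (hc.symm hG).trans h1, h2⟩
  · intro t' ht' hc'
    rw [hn]
    exact Nat.find_min' hex ⟨t', ht', hc.trans hc', rfl⟩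

lemma exists_branch (hG : ∀ a b, G a b → G b a)
    (hrk : Function.Injective rk) (B : Set V) (z₁ z₂ z₃ : V)
    (h1 : z₁ ∈ bd) (h2 : z₂ ∈ bd) (h3 : z₃ ∈ bd)
    (b1 : z₁ ∉ B) (b2 : z₂ ∉ B) (b3 : z₃ ∉ B)
    (a1 : Attached G B z₁) (a2 : Attached G B z₂) (a3 : Attached G B z₃)
    (n12 : ¬ ConnIn G Bᶜ z₁ z₂) (n13 : ¬ ConnIn G Bᶜ z₁ z₃) (n23 : ¬ ConnIn G Bᶜ z₂ z₃) :
    ∃ r s v, Branch G bd rk B r s v := by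
  obtain ⟨t1, d1, e1, f1, c1, m1⟩ := min_rep hG (rk := rk) B z₁ h1 b1 a1
  obtain ⟨t2, d2, e2, f2, c2, m2⟩ := min_rep hG (rk := rk) B z₂ h2 b2 a2
  obtain ⟨t3, d3, e3, f3, c3, m3⟩ := min_rep hG (rk := rk) B z₃ h3 b3 a3
  have k12 : ¬ ConnIn G Bᶜ t1 t2 := fun h => n12 ((c1.trans h).trans (c2.symm hG))
  have k13 : ¬ ConnIn G Bᶜ t1 t3 := fun h => n13 ((c1.trans h).trans (c3.symm hG))
  have k23 : ¬ ConnIn G Bᶜ t2 t3 := fun h => n23 ((c2.trans h).trans (c3.symm hG))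
  have k21 : ¬ ConnIn G Bᶜ t2 t1 := fun h => k12 (h.symm hG)
  have k31 : ¬ ConnIn G Bᶜ t3 t1 := fun h => k13 (h.symm hG)
  have k32 : ¬ ConnIn G Bᶜ t3 t2 := fun h => k23 (h.symm hG)
  have ne : ∀ {a b}, ¬ ConnIn G Bᶜ a b → rk a ≠ rk b := by
    intro a b h h'
    exact h (hrk h' ▸ Relation.ReflTransGen.refl)
  have l12 := ne k12
  have l13 := ne k13
  have l23 := ne k23
  by_cases x3 : rk t1 < rk t3 ∧ rk t2 < rk t3
  · exact ⟨t1, t2, t3, d1, d2, d3, f1, f2, f3, e1, e2, e3, k12, k13, k23, x3.1, x3.2, m3⟩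
  by_cases x2 : rk t1 < rk t2 ∧ rk t3 < rk t2
  · exact ⟨t1, t3, t2, d1, d3, d2, f1, f3, f2, e1, e3, e2, k13, k12, k32, x2.1, x2.2, m2⟩
  · exact ⟨t2, t3, t1, d2, d3, d1, f2, f3, f1, e2, e3, e1, k23, k21, k31,
      by omega, by omega, m1⟩

/-- one half of the injectivity argument -/
lemma branch_aux (hG : ∀ a b, G a b → G b a) {B B' : Set V} (hd : Disjoint B B')
    (hB : ∀ a ∈ B, ∀ b ∈ B, ConnIn G B a b) (hB' : ∀ a ∈ B', ∀ b ∈ B', ConnIn G B' a b)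
    {r s v r' s' : V} (D : Branch G bd rk B r s v) (D' : Branch G bd rk B' r' s' v)
    {y : V} (hy : y ∈ B') (hvy : ConnIn G Bᶜ v y) : False := by
  have sub : B ⊆ B'ᶜ := fun a ha hb => hd.le_bot ⟨ha, hb⟩
  have sub' : B' ⊆ Bᶜ := fun a ha hb => hd.le_bot ⟨hb, ha⟩
  have conB : ∀ a ∈ B, ∀ b ∈ B, ConnIn G B'ᶜ a b := fun a ha b hb =>
    (hB a ha b hb).mono (fun _ _ _ _ h => h) sub
  have conB' : ∀ a ∈ B', ∀ b ∈ B', ConnIn G Bᶜ a b := fun a ha b hb =>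
    (hB' a ha b hb).mono (fun _ _ _ _ h => h) sub'
  -- all of `B'` lies in the `B`-branch of `v`
  have hall : ∀ b ∈ B', ConnIn G Bᶜ v b := fun b hb => hvy.trans (conB' y hy b hb)
  -- `r` is joined to `B` off `B'`
  obtain ⟨w, u, h1, h2, h3, h4⟩ := D.ar
  have rB' : r ∉ B' := fun h => D.rv ((hall r h).symm hG)
  have hru : ConnIn G B'ᶜ r u := by
    rcases h1.first_hit B' rB' with ⟨p, q⟩ | ⟨w', u', p, q, q2, q3, q4, q5⟩
    · refine (p.mono (fun _ _ _ _ h => h) (fun a ha => ha.2)).trans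
        (ConnIn.single h4 q (sub h3))
    · exfalso
      refine D.rv (((p.mono (fun _ _ _ _ h => h) (fun a ha => ha.1)).trans
        (ConnIn.single q5 q4 q3)).trans ((hall u' q2).symm hG))
  -- `v` is not joined to `B` off `B'`
  have hvB : ∀ b ∈ B, ¬ ConnIn G B'ᶜ v b := by
    intro b hb h
    have := D'.vmin r D.hr ((h.trans (conB b hb u h3)).trans (hru.symm hG))
    have := D.rlt
    omega
  -- one of `r', s'` is not joined to `B` off `B'`
  have key : ∀ t ∈ bd, Attached G B' t → rk t < rk v → t ∉ B' →
      (∀ b ∈ B, ¬ ConnIn G B'ᶜ t b) → False := by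
    intro t htb hta htv htB' hno
    obtain ⟨w, u, g1, g2, g3, g4⟩ := hta
    have tB : t ∉ B := fun h => hno t h Relation.ReflTransGen.refl
    have htu : ConnIn G Bᶜ t u := by
      rcases g1.first_hit B tB with ⟨p, q⟩ | ⟨w', u', p, q, q2, q3, q4, q5⟩
      · exact (p.mono (fun _ _ _ _ h => h) (fun a ha => ha.2)).trans
          (ConnIn.single g4 q (sub' g3))
      · exfalso
        exact hno u' q2 ((p.mono (fun _ _ _ _ h => h) (fun a ha => ha.1)).trans
          (ConnIn.single q5 q4 q3))
    have := D.vmin t htb ((hall u g3).trans (htu.symm hG))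
    omega
  by_cases hr' : ∃ b ∈ B, ConnIn G B'ᶜ r' b
  · obtain ⟨b, hb, hbr⟩ := hr'
    refine key s' D'.hs D'.as D'.slt D'.sB fun b' hb' h => D'.rs ?_
    exact (hbr.trans (conB b hb b' hb')).trans (h.symm hG)
  · push Not at hr'
    exact key r' D'.hr D'.ar D'.rlt D'.rB hr'

lemma branch_inj (hG : ∀ a b, G a b → G b a) {B B' : Set V} (hd : Disjoint B B')
    (hB : ∀ a ∈ B, ∀ b ∈ B, ConnIn G B a b) (hB' : ∀ a ∈ B', ∀ b ∈ B', ConnIn G B' a b)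
    {r s v r' s' : V} (D : Branch G bd rk B r s v) (D' : Branch G bd rk B' r' s' v) : False := by
  obtain ⟨w, u, h1, h2, h3, h4⟩ := D.av
  rcases h1.first_hit B' D'.vB with ⟨p, q⟩ | ⟨w', u', p, q, q2, q3, q4, q5⟩
  · refine branch_aux hG hd.symm hB' hB D' D h3 ?_
    exact (p.mono (fun _ _ _ _ h => h) (fun a ha => ha.2)).trans
        (ConnIn.single h4 q (fun hb => hd.le_bot ⟨h3, hb⟩))
  · refine branch_aux hG hd hB hB' D D' q2 ?_
    exact (p.mono (fun _ _ _ _ h => h) (fun a ha => ha.1)).trans (ConnIn.single q5 q4 q3)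

lemma count_trifurcations (hG : ∀ a b, G a b → G b a)
    {ι : Type*} (I : Finset ι) (hrk : Function.Injective rk)
    (bdF : Finset V) (B : ι → Set V)
    (hd : ∀ i j, i ≠ j → Disjoint (B i) (B j))
    (hB : ∀ i ∈ I, ∀ a ∈ B i, ∀ b ∈ B i, ConnIn G (B i) a b)
    (h : ∀ i ∈ I, ∃ z₁ ∈ bdF, ∃ z₂ ∈ bdF, ∃ z₃ ∈ bdF, z₁ ∉ B i ∧ z₂ ∉ B i ∧ z₃ ∉ B i ∧
      Attached G (B i) z₁ ∧ Attached G (B i) z₂ ∧ Attached G (B i) z₃ ∧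
      ¬ ConnIn G (B i)ᶜ z₁ z₂ ∧ ¬ ConnIn G (B i)ᶜ z₁ z₃ ∧ ¬ ConnIn G (B i)ᶜ z₂ z₃) :
    I.card ≤ bdF.card := by
  rcases I.eq_empty_or_nonempty with rfl | ⟨i0, hi0⟩
  · simp
  obtain ⟨v0, -⟩ := h i0 hi0
  have : Nonempty V := ⟨v0⟩
  have hex : ∀ i ∈ I, ∃ v, ∃ r s, Branch G (bdF : Set V) rk (B i) r s v := by
    intro i hi
    obtain ⟨z1, h1, z2, h2, z3, h3, b1, b2, b3, a1, a2, a3, n12, n13, n23⟩ := h i hi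
    obtain ⟨r, s, v, D⟩ := exists_branch hG (bd := (bdF : Set V)) hrk (B i) z1 z2 z3
      h1 h2 h3 b1 b2 b3 a1 a2 a3 n12 n13 n23
    exact ⟨v, r, s, D⟩
  choose! f hf using hex
  refine Finset.card_le_card_of_injOn f ?_ ?_
  · intro i hi
    obtain ⟨r, s, D⟩ := hf i hi
    exact D.hv
  · intro i hi j hj hij
    by_contra hne
    obtain ⟨r, s, D⟩ := hf i hi
    obtain ⟨r', s', D'⟩ := hf j hj
    rw [← hij] at D'
    exact branch_inj hG (hd i j hne) (hB i hi) (hB j hj) D D'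

end count

/-! ## Part 3: planar topology -/

/-- Open steps of the square lattice. -/
def Stp (ω : Cfg) (u v : V2) : Prop :=
  (v = (u.1 + 1, u.2) ∧ ω (u, false) = true) ∨ (u = (v.1 + 1, v.2) ∧ ω (v, false) = true) ∨
  (v = (u.1, u.2 + 1) ∧ ω (u, true) = true) ∨ (u = (v.1, v.2 + 1) ∧ ω (v, true) = true)

lemma Stp.symm {ω : Cfg} (u v : V2) (h : Stp ω u v) : Stp ω v u := by
  unfold Stp at *; tauto

/-- The square box, symmetric around `-s/2`. -/
def Bx (s r : ℤ) : Set V2 := {u | -r - s ≤ u.1 ∧ u.1 ≤ r ∧ -r - s ≤ u.2 ∧ u.2 ≤ r}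

lemma mem_Bx {s r : ℤ} {u : V2} :
    u ∈ Bx s r ↔ -r - s ≤ u.1 ∧ u.1 ≤ r ∧ -r - s ≤ u.2 ∧ u.2 ≤ r := Iff.rfl

/-- indicator of the ray below the face `(a, b)`, shifted by one column -/
def ray (u : V2) (a b : ℤ) : ℤ := if u.1 = a + 1 ∧ u.2 ≤ b then 1 else 0

/-- indicator of being to the left -/
def lef (u : V2) (a : ℤ) : ℤ := if u.1 ≤ a then 1 else 0

lemma winding (ω : Cfg) (S : Set V2) (N : ℤ) (hS : S ⊆ Bx 0 N) (u u' : V2) (hu : u ∈ S)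
    (h : ConnIn (Stp ω) S u u') : ∃ f : ℤ → ℤ → ℤ,
    (∀ a b, ¬ (ω ((a, b + 1), false) = true ∧ (a, b + 1) ∈ S ∧ (a + 1, b + 1) ∈ S) →
      f a (b + 1) = f a b) ∧
    (∀ a b, ¬ (ω ((a + 1, b), true) = true ∧ (a + 1, b) ∈ S ∧ (a + 1, b + 1) ∈ S) →
      f (a + 1) b = f a b + ray u a b - ray u' a b) ∧
    (∀ a b, N ≤ b → f a b = lef u a - lef u' a) ∧
    (∀ a b, b < -N → f a b = 0) ∧
    (∀ a b, a < -N → f a b = 0) := by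
  induction h with
  | refl =>
    refine ⟨fun _ _ => 0, ?_, ?_, ?_, ?_, ?_⟩ <;> intros <;> simp
  | @tail v w _ hvw ih =>
    obtain ⟨f, hV, hH, hT, hB, hL⟩ := ih
    obtain ⟨hst, hv, hw⟩ := hvw
    have bv := mem_Bx.1 (hS hv)
    have bw := mem_Bx.1 (hS hw)
    obtain ⟨x, y⟩ := v
    obtain ⟨x', y'⟩ := w
    simp only [Stp, Prod.mk.injEq] at hst
    simp only at bv bw
    rcases hst with ⟨⟨rfl, rfl⟩, ho⟩ | ⟨⟨rfl, rfl⟩, ho⟩ | ⟨⟨rfl, rfl⟩, ho⟩ | ⟨⟨rfl, rfl⟩, ho⟩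
    · refine ⟨fun a b => f a b + if a = x ∧ y' ≤ b then 1 else 0, ?_, ?_, ?_, ?_, ?_⟩
      · intro a b hn
        have h1 := hV a b hn
        have : ¬ (a = x ∧ b + 1 = y') := by
          rintro ⟨rfl, rfl⟩; exact hn ⟨ho, hv, hw⟩
        clear hV hH hT hB hL hn
        simp only
        split_ifs <;> omega
      · intro a b hn
        have := hH a b hn
        clear hV hH hT hB hL hn
        simp only [ray] at this ⊢
        split_ifs at this ⊢ <;> omega
      · intro a b hb
        have := hT a b hb
        clear hV hH hT hB hL
        simp only [lef] at this ⊢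
        split_ifs at this ⊢ <;> omega
      · intro a b hb
        have := hB a b hb
        clear hV hH hT hB hL
        simp only
        split_ifs <;> omega
      · intro a b hb
        have := hL a b hb
        clear hV hH hT hB hL
        simp only
        split_ifs <;> omega
    · refine ⟨fun a b => f a b - if a = x' ∧ y ≤ b then 1 else 0, ?_, ?_, ?_, ?_, ?_⟩
      · intro a b hn
        have h1 := hV a b hn
        have : ¬ (a = x' ∧ b + 1 = y) := by
          rintro ⟨rfl, rfl⟩; exact hn ⟨ho, hw, hv⟩
        clear hV hH hT hB hL hn
        simp only
        split_ifs <;> omega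
      · intro a b hn
        have := hH a b hn
        clear hV hH hT hB hL hn
        simp only [ray] at this ⊢
        split_ifs at this ⊢ <;> omega
      · intro a b hb
        have := hT a b hb
        clear hV hH hT hB hL
        simp only [lef] at this ⊢
        split_ifs at this ⊢ <;> omega
      · intro a b hb
        have := hB a b hb
        clear hV hH hT hB hL
        simp only
        split_ifs <;> omega
      · intro a b hb
        have := hL a b hb
        clear hV hH hT hB hL
        simp only
        split_ifs <;> omega
    · refine ⟨f, hV, ?_, hT, hB, hL⟩
      intro a b hn
      have h1 := hH a b hn
      have : ¬ (a + 1 = x' ∧ b = y) := by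
        rintro ⟨rfl, rfl⟩; exact hn ⟨ho, hv, hw⟩
      clear hV hH hT hB hL hn
      simp only [ray] at h1 ⊢
      split_ifs at h1 ⊢ <;> omega
    · refine ⟨f, hV, ?_, hT, hB, hL⟩
      intro a b hn
      have h1 := hH a b hn
      have : ¬ (a + 1 = x ∧ b = y') := by
        rintro ⟨rfl, rfl⟩; exact hn ⟨ho, hw, hv⟩
      clear hV hH hT hB hL hn
      simp only [ray] at h1 ⊢
      split_ifs at h1 ⊢ <;> omega

/-- The dual configuration, indexed by faces. -/
def dual (ω : Cfg) : Cfg := fun e =>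
  !(ω (if e.2 then ((e.1.1, e.1.2 + 1), false) else ((e.1.1 + 1, e.1.2), true)))

/-- There is an arm from the box of size `m` to a vertex just outside of the box of size `n`
satisfying `P`. -/
def Arm (s m n : ℤ) (P : V2 → Prop) : Set Cfg :=
  {ω | ∃ u ∈ Bx s m, ∃ w z, ConnIn (Stp ω) (Bx s n) u w ∧ Stp ω w z ∧
    w ∈ Bx s n ∧ z ∉ Bx s n ∧ P z}

/-- octants -/
def RU (s n : ℤ) (z : V2) : Prop := z.1 = n + 1 ∧ 0 ≤ z.2
def TL (s n : ℤ) (z : V2) : Prop := z.2 = n + 1 ∧ z.1 ≤ -s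
def LD (s n : ℤ) (z : V2) : Prop := z.1 = -s - (n + 1) ∧ z.2 ≤ -s
def TR (s n : ℤ) (z : V2) : Prop := z.2 = n + 1 ∧ 0 ≤ z.1
def LU (s n : ℤ) (z : V2) : Prop := z.1 = -s - (n + 1) ∧ 0 ≤ z.2
def BL (s n : ℤ) (z : V2) : Prop := z.2 = -s - (n + 1) ∧ z.1 ≤ -s

/-- a point is in one of the three primal octants -/
def Oct3 (n : ℤ) (z : V2) : Prop := z ∈ Bx 0 (n + 1) ∧ (z.1 = n + 1 ∨ z.2 = n + 1 ∨ z.1 = -(n + 1))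

/-- The face function is constant inside of the dual box, along dual arms. -/
lemma face_conn (ω : Cfg) (m n : ℤ) (hm : 0 ≤ m) (hmn : m ≤ n) (u u' : V2)
    (hu : Oct3 n u) (hu' : Oct3 n u') (f : ℤ → ℤ → ℤ)
    (hV : ∀ a b, ¬ (ω ((a, b + 1), false) = true ∧ (a, b + 1) ∈ Bx 0 (n + 1) \ Bx 0 m ∧
      (a + 1, b + 1) ∈ Bx 0 (n + 1) \ Bx 0 m) → f a (b + 1) = f a b)
    (hH : ∀ a b, ¬ (ω ((a + 1, b), true) = true ∧ (a + 1, b) ∈ Bx 0 (n + 1) \ Bx 0 m ∧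
      (a + 1, b + 1) ∈ Bx 0 (n + 1) \ Bx 0 m) →
      f (a + 1) b = f a b + ray u a b - ray u' a b) :
    (∀ v w, ConnIn (Stp (dual ω)) (Bx 1 n) v w → f v.1 v.2 = f w.1 w.2) ∧
    (∀ v ∈ Bx 1 m, ∀ w ∈ Bx 1 m, f v.1 v.2 = f w.1 w.2) := by
  have hray : ∀ z, Oct3 n z → ∀ a b, -n - 1 ≤ a → a + 1 ≤ n → b ≤ n → ray z a b = 0 := by
    rintro ⟨x, y⟩ hz a b h1 h2 h3
    simp only [Oct3, mem_Bx] at hz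
    simp only [ray]
    rw [if_neg]; omega
  constructor
  · intro v w h
    induction h with
    | refl => rfl
    | @tail v w _ hvw ih =>
      rw [ih]; clear ih
      obtain ⟨hst, hv, hw⟩ := hvw
      obtain ⟨x, y⟩ := v
      obtain ⟨x', y'⟩ := w
      simp only [mem_Bx] at hv hw
      simp only [Stp, Prod.mk.injEq, dual, Bool.not_eq_true', Bool.false_eq_true, if_false,
        if_true] at hst
      rcases hst with ⟨⟨rfl, rfl⟩, ho⟩ | ⟨⟨rfl, rfl⟩, ho⟩ | ⟨⟨rfl, rfl⟩, ho⟩ | ⟨⟨rfl, rfl⟩, ho⟩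
      · have := hH x y' (by simp [ho])
        rw [hray u hu x y' (by omega) (by omega) (by omega),
          hray u' hu' x y' (by omega) (by omega) (by omega)] at this
        simp only; omega
      · have := hH x' y (by simp [ho])
        rw [hray u hu x' y (by omega) (by omega) (by omega),
          hray u' hu' x' y (by omega) (by omega) (by omega)] at this
        simp only; omega
      · exact (hV x' y (by simp [ho])).symm
      · exact (hV x y' (by simp [ho]))
  · have hor : ∀ a b, -m - 1 ≤ a → a + 1 ≤ m → -m - 1 ≤ b → b ≤ m → f (a + 1) b = f a b := by
      intro a b h1 h2 h3 h4
      have := hH a b (by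
        rintro ⟨-, k1, k2⟩
        simp only [mem_sdiff, mem_Bx] at k1 k2
        omega)
      rw [hray u hu a b (by omega) (by omega) (by omega),
        hray u' hu' a b (by omega) (by omega) (by omega)] at this
      omega
    have ver : ∀ a b, -m - 1 ≤ a → a ≤ m → -m - 1 ≤ b → b + 1 ≤ m → f a (b + 1) = f a b := by
      intro a b h1 h2 h3 h4
      exact hV a b (by
        rintro ⟨-, k1, k2⟩
        simp only [mem_sdiff, mem_Bx] at k1 k2
        omega)
    have hor' : ∀ k : ℕ, ∀ b, -m - 1 ≤ b → b ≤ m → -m - 1 + (k : ℤ) ≤ m →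
        f (-m - 1 + k) b = f (-m - 1) b := by
      intro k b h1 h2
      induction k with
      | zero => simp
      | succ k ih =>
        intro h3
        push_cast at h3 ⊢
        rw [← ih (by omega), ← add_assoc]
        exact hor _ _ (by omega) (by omega) h1 h2
    have ver' : ∀ k : ℕ, -m - 1 + (k : ℤ) ≤ m →
        f (-m - 1) (-m - 1 + k) = f (-m - 1) (-m - 1) := by
      intro k
      induction k with
      | zero => simp
      | succ k ih =>
        intro h3
        push_cast at h3 ⊢
        rw [← ih (by omega), ← add_assoc]
        exact ver _ _ (by omega) (by omega) (by omega) (by omega)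
    have all : ∀ v ∈ Bx 1 m, f v.1 v.2 = f (-m - 1) (-m - 1) := by
      rintro ⟨a, b⟩ hv
      simp only [mem_Bx] at hv
      obtain ⟨k, hk⟩ := Int.eq_ofNat_of_zero_le (show 0 ≤ a + m + 1 by omega)
      obtain ⟨l, hl⟩ := Int.eq_ofNat_of_zero_le (show 0 ≤ b + m + 1 by omega)
      have ea : a = -m - 1 + (k : ℤ) := by omega
      have eb : b = -m - 1 + (l : ℤ) := by omega
      simp only
      rw [ea, hor' k b (by omega) (by omega) (by omega), eb, ver' l (by omega)]
    intro v hv w hw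
    rw [all v hv, all w hw]

/-- The three primal arms are separated by the three dual arms. -/
lemma separation (ω : Cfg) (m n : ℤ) (hm : 0 ≤ m) (hmn : m ≤ n)
    (hTR : dual ω ∈ Arm 1 m n (TR 1 n)) (hLU : dual ω ∈ Arm 1 m n (LU 1 n))
    (hBL : dual ω ∈ Arm 1 m n (BL 1 n)) (z₁ z₂ z₃ : V2)
    (m₁ : z₁ ∈ Bx 0 (n + 1)) (m₂ : z₂ ∈ Bx 0 (n + 1)) (m₃ : z₃ ∈ Bx 0 (n + 1))
    (h₁ : RU 0 n z₁) (h₂ : TL 0 n z₂) (h₃ : LD 0 n z₃) :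
    ¬ ConnIn (Stp ω) (Bx 0 (n + 1) \ Bx 0 m) z₁ z₂ ∧
    ¬ ConnIn (Stp ω) (Bx 0 (n + 1) \ Bx 0 m) z₁ z₃ ∧
    ¬ ConnIn (Stp ω) (Bx 0 (n + 1) \ Bx 0 m) z₂ z₃ := by
  -- value of `f` for any pair
  have gen : ∀ u u' : V2, Oct3 n u → Oct3 n u' →
      ConnIn (Stp ω) (Bx 0 (n + 1) \ Bx 0 m) u u' →
      (∃ a, 0 ≤ a ∧ a ≤ n ∧ lef u a - lef u' a = 0) ∧
      (∃ b, 0 ≤ b ∧ b ≤ n ∧ ray u (-n - 2) b - ray u' (-n - 2) b = 0) := by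
    intro u u' hu hu' hc
    have huS : u ∈ Bx 0 (n + 1) \ Bx 0 m := by
      refine ⟨hu.1, fun h => ?_⟩
      have := hu.2
      simp only [mem_Bx] at h
      omega
    obtain ⟨f, hV, hH, hT, hB, hL⟩ := winding ω _ (n + 1) sdiff_subset u u' huS hc
    obtain ⟨c1, c2⟩ := face_conn ω m n hm hmn u u' hu hu' f hV hH
    obtain ⟨v1, b1, w1, x1, p1, q1, r1, s1, t1⟩ := hTR
    obtain ⟨v2, b2, w2, x2, p2, q2, r2, s2, t2⟩ := hLU
    obtain ⟨v3, b3, w3, x3, p3, q3, r3, s3, t3⟩ := hBL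
    have e1 := c1 _ _ p1
    have e2 := c1 _ _ p2
    have e3 := c1 _ _ p3
    have e12 := c2 _ b1 _ b2
    have e13 := c2 _ b1 _ b3
    -- exit at the bottom
    have f3 : f w3.1 w3.2 = 0 := by
      obtain ⟨a, b⟩ := w3
      obtain ⟨a', b'⟩ := x3
      simp only [BL] at t3
      simp only [mem_Bx] at r3 s3
      simp only [Stp, Prod.mk.injEq, dual, Bool.not_eq_true', Bool.false_eq_true, if_false,
        if_true] at q3
      rcases q3 with ⟨⟨rfl, rfl⟩, ho⟩ | ⟨⟨rfl, rfl⟩, ho⟩ | ⟨⟨rfl, rfl⟩, ho⟩ | ⟨⟨rfl, rfl⟩, ho⟩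
      · omega
      · omega
      · omega
      · have := hV a b' (by simp [ho])
        rw [hB a b' (by omega)] at this
        exact this
    constructor
    · obtain ⟨a, b⟩ := w1
      obtain ⟨a', b'⟩ := x1
      simp only [TR] at t1
      simp only [mem_Bx] at r1 s1
      simp only [Stp, Prod.mk.injEq, dual, Bool.not_eq_true', Bool.false_eq_true, if_false,
        if_true] at q1
      rcases q1 with ⟨⟨rfl, rfl⟩, ho⟩ | ⟨⟨rfl, rfl⟩, ho⟩ | ⟨⟨rfl, rfl⟩, ho⟩ | ⟨⟨rfl, rfl⟩, ho⟩
      · omega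
      · omega
      · have := hV a' b (by simp [ho])
        rw [hT a' (b + 1) (by omega)] at this
        refine ⟨a', by omega, by omega, ?_⟩
        simp only at e1
        omega
      · omega
    · obtain ⟨a, b⟩ := w2
      obtain ⟨a', b'⟩ := x2
      simp only [LU] at t2
      simp only [mem_Bx] at r2 s2
      simp only [Stp, Prod.mk.injEq, dual, Bool.not_eq_true', Bool.false_eq_true, if_false,
        if_true] at q2
      rcases q2 with ⟨⟨rfl, rfl⟩, ho⟩ | ⟨⟨rfl, rfl⟩, ho⟩ | ⟨⟨rfl, rfl⟩, ho⟩ | ⟨⟨rfl, rfl⟩, ho⟩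
      · omega
      · have := hH a' b (by simp [ho])
        rw [hL a' b (by omega)] at this
        have ea : a' = -n - 2 := by omega
        subst ea
        refine ⟨b, by omega, by omega, ?_⟩
        simp only at e2
        omega
      · omega
      · omega
  simp only [RU, TL, LD] at h₁ h₂ h₃
  have o1 : Oct3 n z₁ := ⟨m₁, by omega⟩
  have o2 : Oct3 n z₂ := ⟨m₂, by omega⟩
  have o3 : Oct3 n z₃ := ⟨m₃, by omega⟩
  simp only [mem_Bx] at m₁ m₂ m₃
  refine ⟨fun h => ?_, fun h => ?_, fun h => ?_⟩
  · obtain ⟨⟨a, k1, k2, k3⟩, -⟩ := gen _ _ o1 o2 h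
    simp only [lef] at k3
    split_ifs at k3 <;> omega
  · obtain ⟨⟨a, k1, k2, k3⟩, -⟩ := gen _ _ o1 o3 h
    simp only [lef] at k3
    split_ifs at k3 <;> omega
  · obtain ⟨-, ⟨b, k1, k2, k3⟩⟩ := gen _ _ o2 o3 h
    simp only [ray] at k3
    split_ifs at k3 <;> omega

/-! ## Part 4: probabilistic tools -/

/-- The event `S` depends only on the edges in `F`. -/
def DepOn (S : Set Cfg) (F : Set E2) : Prop :=
  ∀ ω ω' : Cfg, (∀ e ∈ F, ω e = ω' e) → ω ∈ S → ω' ∈ S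

lemma DepOn.iff {S : Set Cfg} {F : Set E2} (h : DepOn S F) {ω ω' : Cfg}
    (he : ∀ e ∈ F, ω e = ω' e) : ω ∈ S ↔ ω' ∈ S :=
  ⟨h _ _ he, h _ _ fun e hf => (he e hf).symm⟩

lemma DepOn.mono {S : Set Cfg} {F F' : Set E2} (h : DepOn S F) (hF : F ⊆ F') : DepOn S F' :=
  fun ω ω' he => h ω ω' fun e hf => he e (hF hf)

lemma DepOn.inter_set {S : Set Cfg} {F F' : Set E2} (h : DepOn S F) (h' : DepOn S F') :
    DepOn S (F ∩ F') := by
  classical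
  intro ω ω' he hω
  refine h' (fun e => if e ∈ F then ω e else ω' e) ω' ?_ (h ω _ ?_ hω)
  · intro e hf
    by_cases hF : e ∈ F
    · simp only [hF, if_true]; exact he e ⟨hF, hf⟩
    · simp [hF]
  · intro e hf; simp [hf]

lemma DepOn.inter {S T : Set Cfg} {F : Set E2} (h : DepOn S F) (h' : DepOn T F) :
    DepOn (S ∩ T) F := fun ω ω' he hω => ⟨h ω ω' he hω.1, h' ω ω' he hω.2⟩

/-- coordinate sigma algebras -/
@[reducible] def coordSig (e : E2) : MeasurableSpace Cfg := MeasurableSpace.comap (fun ω => ω e) inferInstance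

lemma coordSig_le (e : E2) : coordSig e ≤ (inferInstance : MeasurableSpace Cfg) :=
  (measurable_pi_apply e).comap_le

lemma iIndep_coordSig : ProbabilityTheory.iIndep coordSig mu := by
  have := ProbabilityTheory.iIndepFun_infinitePi (P := fun _ : E2 => coin)
    (X := fun _ b => b) (fun _ => measurable_id)
  exact this

lemma DepOn.measurable_sig {S : Set Cfg} {F : Set E2} (hF : F.Finite) (h : DepOn S F) :
    MeasurableSet[⨆ e ∈ F, coordSig e] S := by
  classical
  have hfin : Finite F := hF
  have e : S = ⋃ a ∈ {a : F → Bool | ∃ ω ∈ S, ∀ e : F, ω e = a e}, ⋂ e : F,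
      (fun ω : Cfg => ω e) ⁻¹' {a e} := by
    ext ω
    simp only [mem_iUnion, mem_iInter, mem_preimage, mem_singleton_iff, mem_ofPred_eq,
      exists_prop]
    constructor
    · intro hω
      exact ⟨fun e => ω e, ⟨ω, hω, fun _ => rfl⟩, fun _ => rfl⟩
    · rintro ⟨a, ⟨ω', hω', h1⟩, h2⟩
      exact h ω' ω (fun e he => by rw [h1 ⟨e, he⟩, h2 ⟨e, he⟩]) hω'
  rw [e]
  refine MeasurableSet.biUnion (Set.to_countable _) fun a _ => MeasurableSet.iInter fun e => ?_
  have h1 : MeasurableSet[coordSig e] ((fun ω : Cfg => ω e) ⁻¹' {a e}) :=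
    ⟨{a e}, measurableSet_singleton _, rfl⟩
  exact le_iSup₂ (f := fun (e : E2) (_ : e ∈ F) => coordSig e) e.1 e.2 _ h1

lemma DepOn.measurable {S : Set Cfg} {F : Set E2} (hF : F.Finite) (h : DepOn S F) :
    MeasurableSet S := by
  have := h.measurable_sig hF
  exact (iSup₂_le fun e _ => coordSig_le e) _ this

lemma DepOn.indep {S T : Set Cfg} {F F' : Set E2} (hF : F.Finite) (hF' : F'.Finite)
    (h : DepOn S F) (h' : DepOn T F') (hd : Disjoint F F') : mu (S ∩ T) = mu S * mu T := by
  have := ProbabilityTheory.indep_iSup_of_disjoint coordSig_le iIndep_coordSig hd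
  rw [ProbabilityTheory.Indep_iff] at this
  exact this _ _ (h.measurable_sig hF) (h'.measurable_sig hF')

/-- weights of finite-dimensional events -/
lemma mu_eq_sum {S : Set Cfg} (F : Finset E2) (h : DepOn S F) [DecidablePred (· ∈ S)] :
    mu.real S = ∑ a : F → Bool, (2⁻¹ : ℝ) ^ F.card *
      (if (fun e => if h : e ∈ F then a ⟨e, h⟩ else false) ∈ S then 1 else 0) := by
  classical
  set T : Set (F → Bool) := {a | (fun e => if h : e ∈ F then a ⟨e, h⟩ else false) ∈ S} with hT
  have e : S = F.restrict (π := fun _ => Bool) ⁻¹' T := by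
    ext ω
    refine h.iff ?_
    intro e he
    have : e ∈ F := he
    simp [this]
  have h1 : mu S = ∑ a : F → Bool, if a ∈ T then (2⁻¹ : ℝ≥0∞) ^ F.card else 0 := by
    conv_lhs => rw [e]
    rw [← Measure.map_apply (Finset.measurable_restrict F) (Set.toFinite _).measurableSet, mu,
      Measure.infinitePi_map_restrict]
    have : T = ((Finset.univ.filter (· ∈ T) : Finset (F → Bool)) : Set (F → Bool)) := by
      ext; simp
    conv_lhs => rw [this]
    rw [← sum_measure_singleton, Finset.sum_filter]
    refine Finset.sum_congr rfl fun a _ => ?_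
    rw [Measure.pi_singleton]
    simp [coin_singleton]
  rw [Measure.real, h1, ENNReal.toReal_sum]
  · refine Finset.sum_congr rfl fun a _ => ?_
    by_cases ha : a ∈ T
    · rw [if_pos ha, if_pos (by exact ha)]; simp
    · rw [if_neg ha, if_neg (by exact ha)]; simp
  · intro a _
    split_ifs <;> simp

/-- increasing events -/
def Incr (S : Set Cfg) : Prop := ∀ ω ω' : Cfg, (∀ e, ω e = true → ω' e = true) → ω ∈ S → ω' ∈ S

lemma fkg_mu {X Y : Set Cfg} {F : Set E2} (hF : F.Finite) (hX : DepOn X F) (hY : DepOn Y F)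
    (iX : Incr X) (iY : Incr Y) : mu.real X * mu.real Y ≤ mu.real (X ∩ Y) := by
  classical
  obtain ⟨F, rfl⟩ := hF.exists_finset_coe
  rw [mu_eq_sum F hX, mu_eq_sum F hY, mu_eq_sum F (hX.inter hY)]
  have one : ∑ a : F → Bool, (2⁻¹ : ℝ) ^ F.card = 1 := by
    simp
  have mon : ∀ Z : Set Cfg, Incr Z → Monotone (fun a : F → Bool =>
      (if (fun e => if h : e ∈ F then a ⟨e, h⟩ else false) ∈ Z then (1 : ℝ) else 0)) := by
    intro Z hZ a b hab
    simp only
    split_ifs with h1 h2 h2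
    · exact le_rfl
    · refine absurd (hZ _ _ ?_ h1) h2
      intro e he
      by_cases hf : e ∈ F
      · simp only [hf, dif_pos] at he ⊢
        have := hab ⟨e, hf⟩
        rw [he] at this
        exact Bool.le_iff_imp.1 this rfl
      · simp [hf] at he
    · exact zero_le_one
    · exact le_rfl
  have := fkg (μ := fun _ : F → Bool => (2⁻¹ : ℝ) ^ F.card)
    (f := fun a : F → Bool =>
      (if (fun e => if h : e ∈ F then a ⟨e, h⟩ else false) ∈ X then (1 : ℝ) else 0))
    (g := fun a : F → Bool =>
      (if (fun e => if h : e ∈ F then a ⟨e, h⟩ else false) ∈ Y then (1 : ℝ) else 0))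
    (fun a => by positivity) (fun a => by positivity) (fun a => by positivity)
    (mon X iX) (mon Y iY) (fun a b => le_rfl)
  rw [one, one_mul] at this
  refine this.trans (le_of_eq (Finset.sum_congr rfl fun a _ => ?_))
  simp only [mem_inter_iff]
  split_ifs <;> simp_all

lemma fkg_union {X Y : Set Cfg} {F : Set E2} (hF : F.Finite) (hX : DepOn X F) (hY : DepOn Y F)
    (iX : Incr X) (iY : Incr Y) :
    (1 - mu.real X) * (1 - mu.real Y) ≤ 1 - mu.real (X ∪ Y) := by
  have h1 := fkg_mu hF hX hY iX iY
  have h2 := measureReal_union_add_inter (μ := mu) (s := X) (hY.measurable hF)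
  nlinarith

/-! ## Part 5: arms, symmetries, and the square root trick -/

/-- the other endpoint of an edge -/
def tgt (e : E2) : V2 := if e.2 then (e.1.1, e.1.2 + 1) else (e.1.1 + 1, e.1.2)

lemma stp_iff {ω : Cfg} {u v : V2} :
    Stp ω u v ↔ ∃ e, ω e = true ∧ ((u = e.1 ∧ v = tgt e) ∨ (v = e.1 ∧ u = tgt e)) := by
  constructor
  · rintro (⟨h, ho⟩ | ⟨h, ho⟩ | ⟨h, ho⟩ | ⟨h, ho⟩)
    · exact ⟨(u, false), ho, Or.inl ⟨rfl, by simp [tgt, h]⟩⟩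
    · exact ⟨(v, false), ho, Or.inr ⟨rfl, by simp [tgt, h]⟩⟩
    · exact ⟨(u, true), ho, Or.inl ⟨rfl, by simp [tgt, h]⟩⟩
    · exact ⟨(v, true), ho, Or.inr ⟨rfl, by simp [tgt, h]⟩⟩
  · rintro ⟨⟨w, d⟩, ho, h⟩
    cases d <;> rcases h with ⟨rfl, rfl⟩ | ⟨rfl, rfl⟩ <;> simp [Stp, tgt, ho]

lemma Stp.congr {ω ω' : Cfg} {u v : V2} (h : Stp ω u v)
    (he : ∀ e, ((u = e.1 ∧ v = tgt e) ∨ (v = e.1 ∧ u = tgt e)) → ω e = true → ω' e = true) :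
    Stp ω' u v := by
  obtain ⟨e, ho, h1⟩ := stp_iff.1 h
  exact stp_iff.2 ⟨e, he e h1 ho, h1⟩

/-- edges inside of a set -/
def insideE (B : Set V2) : Set E2 := {e | e.1 ∈ B ∧ tgt e ∈ B}

/-- edges touching a set -/
def touchE (B : Set V2) : Set E2 := {e | e.1 ∈ B ∨ tgt e ∈ B}

lemma Bx_finite (s r : ℤ) : (Bx s r).Finite := by
  refine ((Set.finite_Icc (-r - s) r).prod (Set.finite_Icc (-r - s) r)).subset ?_
  rintro ⟨x, y⟩ ⟨h1, h2, h3, h4⟩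
  exact ⟨⟨h1, h2⟩, ⟨h3, h4⟩⟩

lemma tgt_fibre {e e' : E2} (h : tgt e = tgt e') (hd : e.2 = e'.2) : e = e' := by
  obtain ⟨⟨x, y⟩, d⟩ := e
  obtain ⟨⟨x', y'⟩, d'⟩ := e'
  simp only at hd
  subst hd
  cases d <;> simp_all [tgt]

lemma touchE_finite {B : Set V2} (hB : B.Finite) : (touchE B).Finite := by
  have h1 : {e : E2 | e.1 ∈ B}.Finite := by
    refine (hB.prod (Set.finite_univ (α := Bool))).subset ?_
    rintro ⟨v, d⟩ h
    exact ⟨h, mem_univ _⟩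
  have h2 : {e : E2 | tgt e ∈ B}.Finite := by
    refine Set.Finite.of_finite_image (f := fun e => (tgt e, e.2))
      ((hB.prod (Set.finite_univ (α := Bool))).subset ?_) ?_
    · rintro _ ⟨e, h, rfl⟩
      exact ⟨h, mem_univ _⟩
    · intro e _ e' _ h
      simp only [Prod.mk.injEq] at h
      exact tgt_fibre h.1 h.2
  exact h1.union h2

lemma insideE_subset_touchE (B : Set V2) : insideE B ⊆ touchE B := fun _ h => Or.inl h.1

/-- the trivial predicate -/
def All (_ : V2) : Prop := True

lemma arm_all_of_conn {ω : Cfg} {s m n : ℤ} (hmn : Bx s m ⊆ Bx s n) {u z : V2} (hu : u ∈ Bx s m)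
    (hz : z ∉ Bx s n) (h : ConnIn (Stp ω) univ u z) : ω ∈ Arm s m n All := by
  rcases h.first_hit (Bx s n)ᶜ (by simpa using hmn hu) with ⟨-, h2⟩ | ⟨w, v, h1, h2, h3, -, -, h6⟩
  · exact absurd hz h2
  · refine ⟨u, hu, w, v, h1.mono (fun _ _ _ _ h => h) ?_, h6, by simpa using h2, h3, trivial⟩
    intro a ha; simpa using ha.2

lemma conn_of_arm {ω : Cfg} {s m n : ℤ} {P : V2 → Prop} (h : ω ∈ Arm s m n P) :
    ∃ u ∈ Bx s m, ∃ z, z ∉ Bx s n ∧ ConnIn (Stp ω) univ u z := by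
  obtain ⟨u, hu, w, z, h1, h2, h3, h4, -⟩ := h
  exact ⟨u, hu, z, h4, (h1.mono (fun _ _ _ _ h => h) (subset_univ _)).trans
    (ConnIn.single h2 (mem_univ _) (mem_univ _))⟩

lemma Bx_mono {s r r' : ℤ} (h : r ≤ r') : Bx s r ⊆ Bx s r' := by
  rintro ⟨x, y⟩ hx
  simp only [mem_Bx] at *
  omega

lemma arm_mono {s m n s' m' n' : ℤ} {P : V2 → Prop} (h1 : Bx s m ⊆ Bx s' m')
    (h2 : Bx s' m' ⊆ Bx s' n') (h3 : Bx s' n' ⊆ Bx s n) :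
    Arm s m n P ⊆ Arm s' m' n' All := by
  intro ω h
  obtain ⟨u, hu, z, hz, h⟩ := conn_of_arm h
  exact arm_all_of_conn h2 (h1 hu) (fun h' => hz (h3 h')) h

lemma arm_dep_touch (s m n : ℤ) (P : V2 → Prop) : DepOn (Arm s m n P) (touchE (Bx s n)) := by
  rintro ω ω' he ⟨u, hu, w, z, h1, h2, h3, h4, h5⟩
  refine ⟨u, hu, w, z, h1.mono (fun a b ha hb h => h.congr fun e h' ho => ?_) subset_rfl,
    h2.congr fun e h' ho => ?_, h3, h4, h5⟩
  · rw [← he e ?_]; exact ho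
    rcases h' with ⟨rfl, rfl⟩ | ⟨rfl, rfl⟩
    · exact Or.inl h3
    · exact Or.inr h3
  · rw [← he e ?_]; exact ho
    rcases h' with ⟨rfl, rfl⟩ | ⟨rfl, rfl⟩
    · exact Or.inl ha
    · exact Or.inl hb

lemma conn_congr_off {ω ω' : Cfg} {S B : Set V2} (he : ∀ e ∈ (insideE B)ᶜ, ω e = ω' e) {u v : V2}
    (h : ConnIn (Stp ω) (S \ B) u v) : ConnIn (Stp ω') (S \ B) u v := by
  refine h.mono (fun a b ha hb h => h.congr fun e h' ho => ?_) subset_rfl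
  rw [← he e ?_]; exact ho
  rintro ⟨k1, k2⟩
  rcases h' with ⟨rfl, rfl⟩ | ⟨rfl, rfl⟩
  · exact ha.2 k1
  · exact hb.2 k1

lemma stp_congr_off {ω ω' : Cfg} {B : Set V2} (he : ∀ e ∈ (insideE B)ᶜ, ω e = ω' e) {u v : V2}
    (hu : u ∉ B) (h : Stp ω u v) : Stp ω' u v := by
  refine h.congr fun e h' ho => ?_
  rw [← he e ?_]; exact ho
  rintro ⟨k1, k2⟩
  rcases h' with ⟨rfl, rfl⟩ | ⟨rfl, rfl⟩
  · exact hu k1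
  · exact hu k2

lemma arm_dep_off (s m n : ℤ) (hmn : m ≤ n) : DepOn (Arm s m n All) (insideE (Bx s m))ᶜ := by
  intro ω ω' he h
  obtain ⟨u, hu, z, hz, h⟩ := conn_of_arm h
  have hz' : z ∉ Bx s m := fun h' => hz (Bx_mono hmn h')
  rcases (h.symm Stp.symm).first_hit (Bx s m) hz' with ⟨-, h2⟩ | ⟨w, v, h1, h2, h3, -, -, h6⟩
  · exact absurd hu h2
  · refine arm_all_of_conn (Bx_mono hmn) h3 hz (ConnIn.symm Stp.symm ?_)
    exact ((conn_congr_off he h1).mono (fun _ _ _ _ h => h) (subset_univ _)).trans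
      (ConnIn.single (stp_congr_off he h2 h6) (mem_univ _) (mem_univ _))

lemma arm_incr (s m n : ℤ) (P : V2 → Prop) : Incr (Arm s m n P) := by
  rintro ω ω' he ⟨u, hu, w, z, h1, h2, h3, h4, h5⟩
  exact ⟨u, hu, w, z, h1.mono (fun a b ha hb h => h.congr fun e h' ho => he e ho) subset_rfl,
    h2.congr fun e h' ho => he e ho, h3, h4, h5⟩

lemma arm_measurable (s m n : ℤ) (P : V2 → Prop) : MeasurableSet (Arm s m n P) :=
  (arm_dep_touch s m n P).measurable (touchE_finite (Bx_finite s n))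

/-- probability that the arm does not exist -/
noncomputable def noArm (s m n : ℤ) (P : V2 → Prop) : ℝ := 1 - mu.real (Arm s m n P)

lemma noArm_nonneg (s m n : ℤ) (P : V2 → Prop) : 0 ≤ noArm s m n P :=
  sub_nonneg.2 measureReal_le_one

lemma noArm_mul (s m n : ℤ) (P Q : V2 → Prop) :
    noArm s m n P * noArm s m n Q ≤ noArm s m n (fun z => P z ∨ Q z) := by
  have := fkg_union (touchE_finite (Bx_finite s n)) (arm_dep_touch s m n P)
    (arm_dep_touch s m n Q) (arm_incr s m n P) (arm_incr s m n Q)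
  refine this.trans (le_of_eq ?_)
  unfold noArm
  congr 2
  ext ω
  constructor
  · rintro (⟨u, hu, w, z, h1, h2, h3, h4, h5⟩ | ⟨u, hu, w, z, h1, h2, h3, h4, h5⟩)
    · exact ⟨u, hu, w, z, h1, h2, h3, h4, Or.inl h5⟩
    · exact ⟨u, hu, w, z, h1, h2, h3, h4, Or.inr h5⟩
  · rintro ⟨u, hu, w, z, h1, h2, h3, h4, h5 | h5⟩
    · exact Or.inl ⟨u, hu, w, z, h1, h2, h3, h4, h5⟩
    · exact Or.inr ⟨u, hu, w, z, h1, h2, h3, h4, h5⟩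

lemma noArm_congr (s m n : ℤ) (P Q : V2 → Prop)
    (h : ∀ w z, w ∈ Bx s n → z ∉ Bx s n → (∃ e, (z = e.1 ∧ w = tgt e) ∨ (w = e.1 ∧ z = tgt e)) →
      P z → Q z) : noArm s m n Q ≤ noArm s m n P := by
  unfold noArm
  have : mu.real (Arm s m n P) ≤ mu.real (Arm s m n Q) := by
    refine measureReal_mono ?_
    rintro ω ⟨u, hu, w, z, h1, h2, h3, h4, h5⟩
    refine ⟨u, hu, w, z, h1, h2, h3, h4, h w z h3 h4 ?_ h5⟩
    obtain ⟨e, -, h⟩ := stp_iff.1 h2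
    exact ⟨e, h.symm⟩
  linarith

/-- the measure is invariant under injective reindexing -/
lemma mu_reindex (f : E2 → E2) (hf : Function.Injective f) {S : Set Cfg} (hS : MeasurableSet S) :
    mu {ω | (fun e => ω (f e)) ∈ S} = mu S := by
  conv_rhs => rw [mu, ← infinitePi_map_comp_inj coin f hf]
  rw [Measure.map_apply (by fun_prop) hS]
  rfl

lemma map_not : coin.map (fun b => !b) = coin := by
  have := Measure.isProbabilityMeasure_map (μ := coin) (f := fun b => !b)
    measurable_from_top.aemeasurable
  refine eq_coin ?_
  rw [Measure.map_apply measurable_from_top (by measurability)]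
  have : (fun b => !b) ⁻¹' {false} = {true} := by ext b; cases b <;> simp
  rw [this, coin_singleton]

lemma measurable_flip : Measurable (fun (ω : Cfg) (e : E2) => !(ω e)) := by
  refine measurable_pi_iff.2 fun i => ?_
  have h : Measurable (fun b : Bool => !b) := measurable_from_top
  exact h.comp (measurable_pi_apply i)

lemma mu_not {S : Set Cfg} (hS : MeasurableSet S) : mu {ω | (fun e => !(ω e)) ∈ S} = mu S := by
  have h := Measure.infinitePi_map_pi (fun _ : E2 => coin) (f := fun _ b => !b)
    (fun _ => measurable_from_top)
  rw [map_not] at h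
  conv_rhs => rw [mu, ← h]
  rw [Measure.map_apply measurable_flip hS]
  rfl

lemma mu_dual {S : Set Cfg} (hS : MeasurableSet S) : mu {ω | dual ω ∈ S} = mu S := by
  have h1 : MeasurableSet {ω : Cfg | (fun e => !(ω e)) ∈ S} :=
    measurable_flip hS
  rw [← mu_not hS, ← mu_reindex (fun e => if e.2 then ((e.1.1, e.1.2 + 1), false) else
    ((e.1.1 + 1, e.1.2), true)) ?_ h1]
  · rfl
  · rintro ⟨⟨x, y⟩, d⟩ ⟨⟨x', y'⟩, d'⟩ h
    cases d <;> cases d' <;> simp_all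

lemma noArm_symm (s m n : ℤ) (P Q : V2 → Prop) (f : E2 → E2) (hf : Function.Injective f)
    (g : V2 → V2) (hg : ∀ r u, u ∈ Bx s r ↔ g u ∈ Bx s r)
    (hfg : ∀ e, (g e.1 = (f e).1 ∧ g (tgt e) = tgt (f e)) ∨
      (g e.1 = tgt (f e) ∧ g (tgt e) = (f e).1))
    (hPQ : ∀ z, P z → Q (g z)) : noArm s m n Q ≤ noArm s m n P := by
  unfold noArm
  have : mu.real (Arm s m n P) ≤ mu.real (Arm s m n Q) := by
    rw [Measure.real, ← mu_reindex f hf (arm_measurable s m n P)]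
    refine measureReal_mono ?_
    have hst : ∀ (ω : Cfg) u v, Stp (fun e => ω (f e)) u v → Stp ω (g u) (g v) := by
      intro ω u v h
      obtain ⟨e, ho, h⟩ := stp_iff.1 h
      refine stp_iff.2 ⟨f e, ho, ?_⟩
      have := hfg e
      rcases h with ⟨rfl, rfl⟩ | ⟨rfl, rfl⟩ <;> tauto
    rintro ω ⟨u, hu, w, z, h1, h2, h3, h4, h5⟩
    refine ⟨g u, (hg _ _).1 hu, g w, g z, ?_, hst _ _ _ h2, (hg _ _).1 h3,
      fun h => h4 ((hg _ _).2 h), hPQ z h5⟩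
    clear h2 h3
    induction h1 with
    | refl => exact Relation.ReflTransGen.refl
    | tail _ h ih =>
      exact Relation.ReflTransGen.tail ih ⟨hst _ _ _ h.1, (hg _ _).1 h.2.1, (hg _ _).1 h.2.2⟩
  linarith

lemma noArm_refl (s m n : ℤ) (P Q : V2 → Prop) (hPQ : ∀ z : V2, P z → Q (-s - z.1, z.2)) :
    noArm s m n Q ≤ noArm s m n P := by
  refine noArm_symm s m n P Q (fun e => ((if e.2 then -s - e.1.1 else -s - e.1.1 - 1, e.1.2), e.2))
    ?_ (fun z => (-s - z.1, z.2)) ?_ ?_ hPQ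
  · rintro ⟨⟨x, y⟩, d⟩ ⟨⟨x', y'⟩, d'⟩ h
    simp only [Prod.mk.injEq] at h
    obtain ⟨⟨h1, rfl⟩, rfl⟩ := h
    have : x = x' := by split_ifs at h1 <;> omega
    rw [this]
  · rintro r ⟨x, y⟩
    simp only [mem_Bx]; omega
  · rintro ⟨⟨x, y⟩, d⟩
    cases d
    · refine Or.inr ?_
      simp [tgt]; omega
    · refine Or.inl ?_
      simp [tgt]

lemma noArm_swap (s m n : ℤ) (P Q : V2 → Prop) (hPQ : ∀ z : V2, P z → Q (z.2, z.1)) :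
    noArm s m n Q ≤ noArm s m n P := by
  refine noArm_symm s m n P Q (fun e => ((e.1.2, e.1.1), !e.2))
    ?_ (fun z => (z.2, z.1)) ?_ ?_ hPQ
  · rintro ⟨⟨x, y⟩, d⟩ ⟨⟨x', y'⟩, d'⟩ h
    simp only [Prod.mk.injEq] at h
    obtain ⟨⟨h1, rfl⟩, h⟩ := h
    have : d = d' := by cases d <;> cases d' <;> simp_all
    rw [this, h1]
  · rintro r ⟨x, y⟩
    simp only [mem_Bx]; omega
  · rintro ⟨⟨x, y⟩, d⟩
    cases d <;> exact Or.inl (by simp [tgt])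

/-- remaining octants -/
def RD (s n : ℤ) (z : V2) : Prop := z.1 = n + 1 ∧ z.2 ≤ -s
def BR (s n : ℤ) (z : V2) : Prop := z.2 = -s - (n + 1) ∧ 0 ≤ z.1

set_option maxHeartbeats 1600000 in
lemma noArm_octants (s m n : ℤ) (hs : s = 0 ∨ s = 1) (P : V2 → Prop)
    (hP : P = RU s n ∨ P = TL s n ∨ P = LD s n ∨ P = TR s n ∨ P = LU s n ∨ P = BL s n) :
    noArm s m n P ^ 8 ≤ noArm s m n All := by
  have c1 : noArm s m n (LU s n) ≤ noArm s m n (RU s n) := noArm_refl s m n _ _ (by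
    intro z hz; simp only [RU, LU] at *; omega)
  have c2 : noArm s m n (BR s n) ≤ noArm s m n (LU s n) := noArm_swap s m n _ _ (by
    intro z hz; simp only [BR, LU] at *; omega)
  have c3 : noArm s m n (BL s n) ≤ noArm s m n (BR s n) := noArm_refl s m n _ _ (by
    intro z hz; simp only [BR, BL] at *; omega)
  have c4 : noArm s m n (LD s n) ≤ noArm s m n (BL s n) := noArm_swap s m n _ _ (by
    intro z hz; simp only [LD, BL] at *; omega)
  have c5 : noArm s m n (RD s n) ≤ noArm s m n (LD s n) := noArm_refl s m n _ _ (by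
    intro z hz; simp only [LD, RD] at *; omega)
  have c6 : noArm s m n (TL s n) ≤ noArm s m n (RD s n) := noArm_swap s m n _ _ (by
    intro z hz; simp only [TL, RD] at *; omega)
  have c7 : noArm s m n (TR s n) ≤ noArm s m n (TL s n) := noArm_refl s m n _ _ (by
    intro z hz; simp only [TL, TR] at *; omega)
  have c8 : noArm s m n (RU s n) ≤ noArm s m n (TR s n) := noArm_swap s m n _ _ (by
    intro z hz; simp only [RU, TR] at *; omega)
  set b := noArm s m n P with hb
  have b0 : 0 ≤ b := noArm_nonneg _ _ _ _
  have all : b = noArm s m n (RU s n) ∧ b = noArm s m n (LU s n) ∧ b = noArm s m n (BR s n) ∧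
      b = noArm s m n (BL s n) ∧ b = noArm s m n (LD s n) ∧ b = noArm s m n (RD s n) ∧
      b = noArm s m n (TL s n) ∧ b = noArm s m n (TR s n) := by
    rcases hP with h | h | h | h | h | h <;> rw [h] at hb <;>
      refine ⟨?_, ?_, ?_, ?_, ?_, ?_, ?_, ?_⟩ <;> linarith
  obtain ⟨a1, a2, a3, a4, a5, a6, a7, a8⟩ := all
  have p1 := noArm_mul s m n (RU s n) (LU s n)
  have p2 := noArm_mul s m n (BR s n) (BL s n)
  have p3 := noArm_mul s m n (LD s n) (RD s n)
  have p4 := noArm_mul s m n (TL s n) (TR s n)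
  rw [← a1, ← a2] at p1
  rw [← a3, ← a4] at p2
  rw [← a5, ← a6] at p3
  rw [← a7, ← a8] at p4
  have q1 := noArm_mul s m n (fun z => RU s n z ∨ LU s n z) (fun z => BR s n z ∨ BL s n z)
  have q2 := noArm_mul s m n (fun z => LD s n z ∨ RD s n z) (fun z => TL s n z ∨ TR s n z)
  have r := noArm_mul s m n (fun z => (RU s n z ∨ LU s n z) ∨ (BR s n z ∨ BL s n z))
    (fun z => (LD s n z ∨ RD s n z) ∨ (TL s n z ∨ TR s n z))
  have bb : 0 ≤ b * b := mul_nonneg b0 b0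
  have q1' := (mul_le_mul p1 p2 bb (noArm_nonneg _ _ _ _)).trans q1
  have q2' := (mul_le_mul p3 p4 bb (noArm_nonneg _ _ _ _)).trans q2
  have r' := (mul_le_mul q1' q2' (mul_nonneg bb bb) (noArm_nonneg _ _ _ _)).trans r
  have e : b ^ 8 = b * b * (b * b) * (b * b * (b * b)) := by ring
  rw [e]
  refine r'.trans (noArm_congr s m n _ _ ?_)
  rintro ⟨x, y⟩ ⟨x', y'⟩ hw hz ⟨⟨⟨x'', y''⟩, d⟩, he⟩ -
  simp only [mem_Bx] at hw hz
  have k1 : x' = n + 1 ∨ x' = -s - (n + 1) ∨ y' = n + 1 ∨ y' = -s - (n + 1) := by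
    clear * - hw hz he
    cases d <;> simp only [tgt, Prod.mk.injEq, Bool.false_eq_true, if_false, if_true] at he <;>
      omega
  have k2 : 0 ≤ x' ∨ x' ≤ -s := by clear * - hs; omega
  have k3 : 0 ≤ y' ∨ y' ≤ -s := by clear * - hs; omega
  clear * - k1 k2 k3
  simp only [RU, LU, BR, BL, LD, RD, TL, TR]
  tauto

/-! ## Part 6: zero-one law -/

/-- long arms from the box of size `m` -/
def LongArm (s : ℤ) (m : ℕ) : Set Cfg := ⋂ (n : ℕ) (_ : m ≤ n), Arm s m n All

lemma longArm_mono (s : ℤ) : Monotone (LongArm s) := by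
  intro m m' h ω hω
  simp only [LongArm, mem_iInter] at *
  intro n hn
  exact arm_mono (Bx_mono (by exact_mod_cast h)) (Bx_mono (by exact_mod_cast hn)) subset_rfl
    (hω n (h.trans hn))

lemma inside_large (s : ℤ) (hs : 0 ≤ s) (T : Set E2) (hT : T.Finite) :
    ∃ M : ℕ, ∀ m : ℕ, M ≤ m → T ⊆ insideE (Bx s m) := by
  obtain ⟨M, hM⟩ := (hT.image (fun e : E2 => e.1.1.natAbs + e.1.2.natAbs + 1)).bddAbove
  refine ⟨M, fun m hm e he => ?_⟩
  have h := hM (mem_image_of_mem _ he)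
  obtain ⟨⟨x, y⟩, d⟩ := e
  simp only at h
  have : x.natAbs + y.natAbs + 1 ≤ m := h.trans hm
  constructor
  · simp only [mem_Bx]; omega
  · cases d <;> simp only [tgt, mem_Bx, Bool.false_eq_true, if_false, if_true] <;> omega

lemma longArm_zero_one (s : ℤ) (hs : 0 ≤ s) :
    mu (⋃ m, LongArm s m) = 0 ∨ mu (⋃ m, LongArm s m) = 1 := by
  refine ProbabilityTheory.measure_zero_or_one_of_measurableSet_limsup (s := coordSig)
    (f := Filter.cofinite) (p := Set.Finite) (ns := fun F : Finset E2 => (F : Set E2))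
    coordSig_le iIndep_coordSig (fun t ht => ht.compl_mem_cofinite) ?_ (fun F => F.finite_toSet)
    (fun e => ⟨{e}, by simp⟩) ?_
  · classical
    intro F G
    exact ⟨F ∪ G, by simp, by simp⟩
  · rw [Filter.limsup_eq_iInf_iSup, MeasurableSpace.measurableSet_iInf]
    intro S
    rw [MeasurableSpace.measurableSet_iInf]
    intro hS
    obtain ⟨M, hM⟩ := inside_large s hs Sᶜ hS
    have e : ⋃ m, LongArm s m = ⋃ m, LongArm s (m + M) := by
      apply subset_antisymm
      · exact iUnion_mono fun m => longArm_mono s (Nat.le_add_right _ _)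
      · exact iUnion_subset fun m => subset_iUnion (LongArm s) (m + M)
    rw [e]
    refine MeasurableSet.iUnion fun m => ?_
    refine MeasurableSet.iInter fun n => MeasurableSet.iInter fun hn => ?_
    have h1 := (arm_dep_touch s (m + M : ℕ) n All).inter_set
      (arm_dep_off s (m + M : ℕ) n (by exact_mod_cast hn))
    have h2 := h1.measurable_sig ((touchE_finite (Bx_finite s n)).subset inter_subset_left)
    refine (iSup₂_le fun e he => ?_ : _ ≤ ⨆ e ∈ S, coordSig e) _ h2
    refine le_iSup₂ (f := fun (e : E2) (_ : e ∈ S) => coordSig e) e ?_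
    by_contra hne
    exact he.2 (hM (m + M) (Nat.le_add_left _ _) hne)

lemma longArm_measurable (s : ℤ) (m : ℕ) : MeasurableSet (LongArm s m) :=
  MeasurableSet.iInter fun n => MeasurableSet.iInter fun _ => arm_measurable s m n All

/-- The percolation event. -/
def Perc : Set Cfg := LongArm 0 0

lemma perc_subset (s : ℤ) (hs : s = 0 ∨ s = 1) : Perc ⊆ LongArm s 0 := by
  intro ω hω
  simp only [Perc, LongArm, mem_iInter] at *
  intro n _
  refine arm_mono ?_ (Bx_mono (by simp)) ?_ (hω (n + 1) (by simp))
  · rintro ⟨x, y⟩ h; simp only [mem_Bx] at *; push_cast at *; omega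
  · rintro ⟨x, y⟩ h; simp only [mem_Bx] at *; push_cast at *; omega

lemma noArm_small (hpos : mu Perc ≠ 0) (s : ℤ) (hs : s = 0 ∨ s = 1) (ε : ℝ) (hε : 0 < ε) :
    ∃ M : ℕ, ∀ m : ℕ, M ≤ m → ∀ n : ℕ, m ≤ n → noArm s m n All < ε := by
  have h1 : mu (⋃ m, LongArm s m) = 1 := by
    refine (longArm_zero_one s (by omega)).resolve_left fun h => hpos ?_
    exact measure_mono_null ((perc_subset s hs).trans (subset_iUnion (LongArm s) 0)) h
  have h2 := tendsto_measure_iUnion_atTop (μ := mu) (longArm_mono s)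
  rw [h1] at h2
  have h3 : Filter.Tendsto (fun m => mu.real (LongArm s m)) Filter.atTop (nhds 1) := by
    have := (ENNReal.tendsto_toReal (by simp)).comp h2
    rw [ENNReal.toReal_one] at this
    exact this
  have h4 := h3.eventually (lt_mem_nhds (show 1 - ε < 1 by linarith))
  obtain ⟨M, hM⟩ := Filter.eventually_atTop.1 h4
  refine ⟨M, fun m hm n hn => ?_⟩
  have h5 := hM m hm
  have h6 : mu.real (LongArm s m) ≤ mu.real (Arm s m n All) :=
    measureReal_mono (iInter₂_subset n hn)
  unfold noArm
  linarith

/-- With probability at least one half, the six arms exist. -/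
lemma six_arms (hpos : mu Perc ≠ 0) : ∃ m : ℕ, ∀ n : ℕ, m ≤ n →
    1 / 2 ≤ mu.real {ω | ω ∈ Arm 0 m n (RU 0 n) ∧ ω ∈ Arm 0 m n (TL 0 n) ∧
      ω ∈ Arm 0 m n (LD 0 n) ∧ dual ω ∈ Arm 1 m n (TR 1 n) ∧ dual ω ∈ Arm 1 m n (LU 1 n) ∧
      dual ω ∈ Arm 1 m n (BL 1 n)} := by
  obtain ⟨M0, h0⟩ := noArm_small hpos 0 (Or.inl rfl) ((1 / 12) ^ 8) (by positivity)
  obtain ⟨M1, h1⟩ := noArm_small hpos 1 (Or.inr rfl) ((1 / 12) ^ 8) (by positivity)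
  refine ⟨max M0 M1, fun n hn => ?_⟩
  generalize hm : max M0 M1 = m at *
  have k0 := h0 m (by omega) n hn
  have k1 := h1 m (by omega) n hn
  have key : ∀ s : ℤ, ∀ P, (s = 0 ∨ s = 1) → noArm s m n All < (1 / 12) ^ 8 →
      (P = RU s n ∨ P = TL s n ∨ P = LD s n ∨ P = TR s n ∨ P = LU s n ∨ P = BL s n) →
      mu.real (Arm s m n P)ᶜ ≤ 1 / 12 := by
    intro s P hs k hP
    have := (noArm_octants s m n hs P hP).trans k.le
    rw [probReal_compl_eq_one_sub (arm_measurable s m n P)]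
    exact le_of_pow_le_pow_left₀ (by norm_num) (by norm_num) this
  have dkey : ∀ P, (P = RU 1 n ∨ P = TL 1 n ∨ P = LD 1 n ∨ P = TR 1 n ∨ P = LU 1 n ∨ P = BL 1 n) →
      mu.real {ω | dual ω ∈ (Arm 1 m n P)ᶜ} ≤ 1 / 12 := by
    intro P hP
    rw [Measure.real, mu_dual (arm_measurable 1 m n P).compl]
    exact key 1 P (Or.inr rfl) k1 hP
  have a1 := key 0 (RU 0 n) (Or.inl rfl) k0 (by tauto)
  have a2 := key 0 (TL 0 n) (Or.inl rfl) k0 (by tauto)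
  have a3 := key 0 (LD 0 n) (Or.inl rfl) k0 (by tauto)
  have a4 := dkey (TR 1 n) (by tauto)
  have a5 := dkey (LU 1 n) (by tauto)
  have a6 := dkey (BL 1 n) (by tauto)
  set E := {ω | ω ∈ Arm 0 m n (RU 0 n) ∧ ω ∈ Arm 0 m n (TL 0 n) ∧
      ω ∈ Arm 0 m n (LD 0 n) ∧ dual ω ∈ Arm 1 m n (TR 1 n) ∧ dual ω ∈ Arm 1 m n (LU 1 n) ∧
      dual ω ∈ Arm 1 m n (BL 1 n)} with hE
  have cover : (univ : Set Cfg) ⊆ E ∪ ((Arm 0 m n (RU 0 n))ᶜ ∪ ((Arm 0 m n (TL 0 n))ᶜ ∪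
      ((Arm 0 m n (LD 0 n))ᶜ ∪ ({ω | dual ω ∈ (Arm 1 m n (TR 1 n))ᶜ} ∪
      ({ω | dual ω ∈ (Arm 1 m n (LU 1 n))ᶜ} ∪ {ω | dual ω ∈ (Arm 1 m n (BL 1 n))ᶜ}))))) := by
    intro ω _
    simp only [hE, mem_union, mem_ofPred_eq, mem_compl_iff]
    tauto
  have t := measureReal_mono (μ := mu) cover
  rw [probReal_univ] at t
  have u1 := measureReal_union_le (μ := mu) E ((Arm 0 m n (RU 0 n))ᶜ ∪ ((Arm 0 m n (TL 0 n))ᶜ ∪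
      ((Arm 0 m n (LD 0 n))ᶜ ∪ ({ω | dual ω ∈ (Arm 1 m n (TR 1 n))ᶜ} ∪
      ({ω | dual ω ∈ (Arm 1 m n (LU 1 n))ᶜ} ∪ {ω | dual ω ∈ (Arm 1 m n (BL 1 n))ᶜ})))))
  have u2 := measureReal_union_le (μ := mu) (Arm 0 m n (RU 0 n))ᶜ ((Arm 0 m n (TL 0 n))ᶜ ∪
      ((Arm 0 m n (LD 0 n))ᶜ ∪ ({ω | dual ω ∈ (Arm 1 m n (TR 1 n))ᶜ} ∪
      ({ω | dual ω ∈ (Arm 1 m n (LU 1 n))ᶜ} ∪ {ω | dual ω ∈ (Arm 1 m n (BL 1 n))ᶜ}))))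
  have u3 := measureReal_union_le (μ := mu) (Arm 0 m n (TL 0 n))ᶜ
      ((Arm 0 m n (LD 0 n))ᶜ ∪ ({ω | dual ω ∈ (Arm 1 m n (TR 1 n))ᶜ} ∪
      ({ω | dual ω ∈ (Arm 1 m n (LU 1 n))ᶜ} ∪ {ω | dual ω ∈ (Arm 1 m n (BL 1 n))ᶜ})))
  have u4 := measureReal_union_le (μ := mu)
      (Arm 0 m n (LD 0 n))ᶜ ({ω | dual ω ∈ (Arm 1 m n (TR 1 n))ᶜ} ∪
      ({ω | dual ω ∈ (Arm 1 m n (LU 1 n))ᶜ} ∪ {ω | dual ω ∈ (Arm 1 m n (BL 1 n))ᶜ}))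
  have u5 := measureReal_union_le (μ := mu) {ω | dual ω ∈ (Arm 1 m n (TR 1 n))ᶜ}
      ({ω | dual ω ∈ (Arm 1 m n (LU 1 n))ᶜ} ∪ {ω | dual ω ∈ (Arm 1 m n (BL 1 n))ᶜ})
  have u6 := measureReal_union_le (μ := mu)
      {ω | dual ω ∈ (Arm 1 m n (LU 1 n))ᶜ} {ω | dual ω ∈ (Arm 1 m n (BL 1 n))ᶜ}
  linarith

/-! ## Part 7: trifurcations -/

/-- A vertex outside of `S'` that is connected to `B` inside of `S`. -/
def GoodEnd (ω : Cfg) (B S S' : Set V2) (z : V2) : Prop :=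
  z ∉ S' ∧ ∃ w u, ConnIn (Stp ω) (S \ B) z w ∧ w ∈ S ∧ w ∉ B ∧ u ∈ B ∧ Stp ω w u

/-- trifurcation boxes -/
def TriAt (ω : Cfg) (B S S' : Set V2) : Prop :=
  ∃ z₁ z₂ z₃, GoodEnd ω B S S' z₁ ∧ GoodEnd ω B S S' z₂ ∧ GoodEnd ω B S S' z₃ ∧
    ¬ ConnIn (Stp ω) (S \ B) z₁ z₂ ∧ ¬ ConnIn (Stp ω) (S \ B) z₁ z₃ ∧
    ¬ ConnIn (Stp ω) (S \ B) z₂ z₃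

lemma ConnIn.map {V W : Type*} {G : V → V → Prop} {G' : W → W → Prop} {S : Set V} {S' : Set W}
    (g : V → W) (hG : ∀ a b, G a b → G' (g a) (g b)) (hS : ∀ a ∈ S, g a ∈ S') {a b : V}
    (h : ConnIn G S a b) : ConnIn G' S' (g a) (g b) := by
  induction h with
  | refl => exact Relation.ReflTransGen.refl
  | tail _ h ih => exact Relation.ReflTransGen.tail ih ⟨hG _ _ h.1, hS _ h.2.1, hS _ h.2.2⟩

/-- restriction of the graph to a set -/
def StpD (ω : Cfg) (D : Set V2) (a b : V2) : Prop := Stp ω a b ∧ a ∈ D ∧ b ∈ D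

lemma conn_stpD {ω : Cfg} {D B : Set V2} {a b : V2} (h : ConnIn (StpD ω D) Bᶜ a b) :
    ConnIn (Stp ω) (D \ B) a b := by
  induction h with
  | refl => exact Relation.ReflTransGen.refl
  | tail _ h ih =>
    exact Relation.ReflTransGen.tail ih ⟨h.1.1, ⟨h.1.2.1, h.2.1⟩, ⟨h.1.2.2, h.2.2⟩⟩

lemma goodEnd_truncate {ω : Cfg} {B S S' D : Set V2} {bd : Finset V2} (hDS' : D ⊆ S')
    (hBD : ∀ u ∈ B, ∀ w, Stp ω w u → w ∈ D) (hB : B ⊆ D)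
    (hbd : ∀ w ∈ D, ∀ u, u ∉ D → Stp ω w u → w ∈ bd) {z : V2} (h : GoodEnd ω B S S' z) :
    ∃ y ∈ bd, Attached (StpD ω D) B y ∧ ConnIn (Stp ω) (S \ B) z y := by
  obtain ⟨hz, w, u, h1, h2, h3, h4, h5⟩ := h
  have hw : w ∈ D := hBD u h4 w h5
  rcases (h1.symm Stp.symm).first_hit Dᶜ (by simpa using hw) with
    ⟨-, k⟩ | ⟨w', v, k1, k2, k3, -, k5, k6⟩
  · exact absurd (fun h => hz (hDS' h)) k
  · have hw' : w' ∈ D := by simpa using k2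
    refine ⟨w', hbd w' hw' v k3 k6, ⟨w, u, ?_, h3, h4, h5, hw, hB h4⟩, ?_⟩
    · refine (k1.symm Stp.symm).mono (fun a b ha hb h => ⟨h, ?_, ?_⟩) (fun a ha => ha.1.2)
      · simpa using ha.2
      · simpa using hb.2
    · exact h1.trans (k1.mono (fun _ _ _ _ h => h) (fun a ha => ha.1))

lemma tri_truncate {ω : Cfg} {B S S' D : Set V2} {bd : Finset V2} (hDS' : D ⊆ S') (hDS : D ⊆ S)
    (hBD : ∀ u ∈ B, ∀ w, Stp ω w u → w ∈ D) (hB : B ⊆ D)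
    (hbd : ∀ w ∈ D, ∀ u, u ∉ D → Stp ω w u → w ∈ bd) (hbB : ∀ z ∈ bd, z ∉ B)
    (h : TriAt ω B S S') :
    ∃ z₁ ∈ bd, ∃ z₂ ∈ bd, ∃ z₃ ∈ bd, z₁ ∉ B ∧ z₂ ∉ B ∧ z₃ ∉ B ∧
      Attached (StpD ω D) B z₁ ∧ Attached (StpD ω D) B z₂ ∧ Attached (StpD ω D) B z₃ ∧
      ¬ ConnIn (StpD ω D) Bᶜ z₁ z₂ ∧ ¬ ConnIn (StpD ω D) Bᶜ z₁ z₃ ∧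
      ¬ ConnIn (StpD ω D) Bᶜ z₂ z₃ := by
  obtain ⟨z₁, z₂, z₃, g1, g2, g3, n1, n2, n3⟩ := h
  obtain ⟨y₁, b1, a1, c1⟩ := goodEnd_truncate hDS' hBD hB hbd g1
  obtain ⟨y₂, b2, a2, c2⟩ := goodEnd_truncate hDS' hBD hB hbd g2
  obtain ⟨y₃, b3, a3, c3⟩ := goodEnd_truncate hDS' hBD hB hbd g3
  have key : ∀ {a b y y' : V2}, ConnIn (Stp ω) (S \ B) a y → ConnIn (Stp ω) (S \ B) b y' →
      ConnIn (StpD ω D) Bᶜ y y' → ConnIn (Stp ω) (S \ B) a b := by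
    intro a b y y' h h' h''
    refine (h.trans ((conn_stpD h'').mono (fun _ _ _ _ h => h) ?_)).trans (h'.symm Stp.symm)
    exact fun a ha => ⟨hDS ha.1, ha.2⟩
  exact ⟨y₁, b1, y₂, b2, y₃, b3, hbB _ b1, hbB _ b2, hbB _ b3, a1, a2, a3,
    fun h => n1 (key c1 c2 h), fun h => n2 (key c1 c3 h), fun h => n3 (key c2 c3 h)⟩

/-- The trifurcation event at the origin. -/
def Tri0 (m n : ℤ) : Set Cfg := {ω | TriAt ω (Bx 0 m) (Bx 0 (n + 1)) (Bx 0 n)}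

lemma stp_Bx {ω : Cfg} {s n : ℤ} {w z : V2} (hw : w ∈ Bx s n) (h : Stp ω w z) :
    z ∈ Bx s (n + 1) := by
  obtain ⟨x, y⟩ := w
  obtain ⟨x', y'⟩ := z
  simp only [mem_Bx, Stp, Prod.mk.injEq] at *
  omega

lemma goodEnd_of_arm {ω : Cfg} {m n : ℤ} (hmn : m ≤ n) {P : V2 → Prop}
    (h : ω ∈ Arm 0 m n P) :
    ∃ z, z ∈ Bx 0 (n + 1) ∧ P z ∧ GoodEnd ω (Bx 0 m) (Bx 0 (n + 1)) (Bx 0 n) z := by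
  obtain ⟨u, hu, w, z, h1, h2, h3, h4, h5⟩ := h
  have hz := stp_Bx h3 h2
  have sub : Bx 0 n ⊆ Bx 0 (n + 1) := Bx_mono (by omega)
  have hc : ConnIn (Stp ω) (Bx 0 (n + 1)) u z :=
    (h1.mono (fun _ _ _ _ h => h) sub).trans (ConnIn.single h2 (sub h3) hz)
  have hz' : z ∉ Bx 0 m := fun h => h4 (Bx_mono hmn h)
  rcases (hc.symm Stp.symm).first_hit (Bx 0 m) hz' with ⟨-, k⟩ | ⟨w', v, k1, k2, k3, -, k5, k6⟩
  · exact absurd hu k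
  · exact ⟨z, hz, h5, h4, w', v, k1, k5, k2, k3, k6⟩

lemma tri_of_six {ω : Cfg} {m n : ℤ} (hm : 0 ≤ m) (hmn : m ≤ n)
    (h : ω ∈ Arm 0 m n (RU 0 n) ∧ ω ∈ Arm 0 m n (TL 0 n) ∧
      ω ∈ Arm 0 m n (LD 0 n) ∧ dual ω ∈ Arm 1 m n (TR 1 n) ∧ dual ω ∈ Arm 1 m n (LU 1 n) ∧
      dual ω ∈ Arm 1 m n (BL 1 n)) : ω ∈ Tri0 m n := by
  obtain ⟨h1, h2, h3, h4, h5, h6⟩ := h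
  obtain ⟨z₁, m₁, p₁, g₁⟩ := goodEnd_of_arm hmn h1
  obtain ⟨z₂, m₂, p₂, g₂⟩ := goodEnd_of_arm hmn h2
  obtain ⟨z₃, m₃, p₃, g₃⟩ := goodEnd_of_arm hmn h3
  obtain ⟨n1, n2, n3⟩ := separation ω m n hm hmn h4 h5 h6 z₁ z₂ z₃ m₁ m₂ m₃ p₁ p₂ p₃
  exact ⟨z₁, z₂, z₃, g₁, g₂, g₃, n1, n2, n3⟩

lemma tri_dep_aux (F : Set E2) (m n : ℤ)
    (hF : ∀ a b e, a ∈ Bx 0 (n + 1) \ Bx 0 m → b ∈ Bx 0 (n + 1) → ((a = e.1 ∧ b = tgt e) ∨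
      (b = e.1 ∧ a = tgt e)) → e ∈ F) (hmn : m ≤ n) : DepOn (Tri0 m n) F := by
  rintro ω ω' he ⟨z₁, z₂, z₃, g1, g2, g3, n1, n2, n3⟩
  have st : ∀ ω ω' : Cfg, (∀ e ∈ F, ω e = ω' e) → ∀ a b, a ∈ Bx 0 (n + 1) \ Bx 0 m →
      b ∈ Bx 0 (n + 1) → Stp ω a b → Stp ω' a b := by
    intro ω ω' he a b ha hb h
    exact h.congr fun e h' ho => by rw [← he e (hF a b e ha hb h')]; exact ho
  have cn : ∀ ω ω' : Cfg, (∀ e ∈ F, ω e = ω' e) → ∀ a b,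
      ConnIn (Stp ω) (Bx 0 (n + 1) \ Bx 0 m) a b → ConnIn (Stp ω') (Bx 0 (n + 1) \ Bx 0 m) a b := by
    intro ω ω' he a b h
    exact h.mono (fun a b ha hb h => st ω ω' he a b ha hb.1 h) subset_rfl
  have gd : ∀ z, GoodEnd ω (Bx 0 m) (Bx 0 (n + 1)) (Bx 0 n) z →
      GoodEnd ω' (Bx 0 m) (Bx 0 (n + 1)) (Bx 0 n) z := by
    rintro z ⟨h0, w, u, h1, h2, h3, h4, h5⟩
    exact ⟨h0, w, u, cn ω ω' he _ _ h1, h2, h3, h4,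
      st ω ω' he w u ⟨h2, h3⟩ (Bx_mono (by omega) h4) h5⟩
  have he' : ∀ e ∈ F, ω' e = ω e := fun e h => (he e h).symm
  exact ⟨z₁, z₂, z₃, gd _ g1, gd _ g2, gd _ g3, fun h => n1 (cn _ _ he' _ _ h),
    fun h => n2 (cn _ _ he' _ _ h), fun h => n3 (cn _ _ he' _ _ h)⟩

lemma tri_dep (m n : ℤ) (hmn : m ≤ n) :
    DepOn (Tri0 m n) (touchE (Bx 0 (n + 1)) \ insideE (Bx 0 m)) := by
  refine tri_dep_aux _ m n ?_ hmn
  rintro a b e ha hb (⟨rfl, rfl⟩ | ⟨rfl, rfl⟩)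
  · exact ⟨Or.inl ha.1, fun h => ha.2 h.1⟩
  · exact ⟨Or.inl hb, fun h => ha.2 h.2⟩

/-- all edges inside of the box are open -/
def OpenBox (m : ℤ) : Set Cfg := {ω | ∀ e ∈ insideE (Bx 0 m), ω e = true}

lemma openBox_dep (m : ℤ) : DepOn (OpenBox m) (insideE (Bx 0 m)) := by
  intro ω ω' he h e hf
  rw [← he e hf]; exact h e hf

lemma insideE_finite (m : ℤ) : (insideE (Bx 0 m)).Finite :=
  (touchE_finite (Bx_finite 0 m)).subset (insideE_subset_touchE _)

lemma openBox_pos (m : ℤ) : mu (OpenBox m) ≠ 0 := by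
  obtain ⟨F, hF⟩ := (insideE_finite m).exists_finset_coe
  have : OpenBox m = Set.pi (F : Set E2) (fun _ => {true}) := by
    ext ω; simp [OpenBox, hF, Set.mem_pi]
  rw [this, mu, Measure.infinitePi_pi _ (fun _ _ => measurableSet_singleton _)]
  simp [coin_singleton]

lemma tri_open_ge (hpos : mu Perc ≠ 0) : ∃ m : ℕ, ∃ c : ℝ≥0∞, c ≠ 0 ∧ ∀ n : ℕ, m ≤ n →
    c ≤ mu (Tri0 m n ∩ OpenBox m) := by
  obtain ⟨m, hm⟩ := six_arms hpos
  refine ⟨m, 2⁻¹ * mu (OpenBox m), ?_, fun n hn => ?_⟩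
  · exact mul_ne_zero (by simp) (openBox_pos m)
  · rw [DepOn.indep ((touchE_finite (Bx_finite 0 (n + 1))).subset sdiff_subset)
      (insideE_finite m) (tri_dep m n (by exact_mod_cast hn)) (openBox_dep m) disjoint_sdiff_left]
    gcongr
    have h1 : 1 / 2 ≤ mu.real (Tri0 m n) := (hm n hn).trans (measureReal_mono fun ω hω =>
      tri_of_six (by simp) (by exact_mod_cast hn) hω)
    have h2 := ENNReal.ofReal_le_ofReal h1
    rw [ofReal_measureReal, one_div, ENNReal.ofReal_inv_of_pos (by norm_num)] at h2
    simpa using h2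

/-- translation of configurations -/
def shift (x : V2) (ω : Cfg) : Cfg := fun e => ω (e.1 + x, e.2)

lemma stp_shift {x : V2} {ω : Cfg} {u v : V2} :
    Stp (shift x ω) u v ↔ Stp ω (u + x) (v + x) := by
  obtain ⟨a, b⟩ := u
  obtain ⟨c, d⟩ := v
  obtain ⟨x, y⟩ := x
  simp only [Stp, shift, Prod.mk_add_mk, Prod.mk.injEq]
  refine or_congr ?_ (or_congr ?_ (or_congr ?_ ?_)) <;> refine and_congr_left fun _ => ?_ <;> omega

/-- boxes around `x` -/
def BxA (x : V2) (r : ℤ) : Set V2 := {v | v - x ∈ Bx 0 r}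

lemma tri_shift {x : V2} {ω : Cfg} {m n : ℤ} (h : shift x ω ∈ Tri0 m n) :
    TriAt ω (BxA x m) (BxA x (n + 1)) (BxA x n) := by
  have mm : ∀ v r, v + x ∈ BxA x r ↔ v ∈ Bx 0 r := by
    intro v r; simp [BxA]
  obtain ⟨z₁, z₂, z₃, g1, g2, g3, n1, n2, n3⟩ := h
  have f : ∀ a b, ConnIn (Stp (shift x ω)) (Bx 0 (n + 1) \ Bx 0 m) a b →
      ConnIn (Stp ω) (BxA x (n + 1) \ BxA x m) (a + x) (b + x) := by
    intro a b h
    refine h.map (· + x) (fun a b h => stp_shift.1 h) ?_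
    intro a ha
    exact ⟨(mm _ _).2 ha.1, fun h => ha.2 ((mm _ _).1 h)⟩
  have b : ∀ a b, ConnIn (Stp ω) (BxA x (n + 1) \ BxA x m) (a + x) (b + x) →
      ConnIn (Stp (shift x ω)) (Bx 0 (n + 1) \ Bx 0 m) a b := by
    intro a b h
    have := h.map (G' := Stp (shift x ω)) (S' := Bx 0 (n + 1) \ Bx 0 m) (· - x)
      (fun a b h => stp_shift.2 (by simpa using h)) (fun a ha => ha)
    simpa using this
  have g : ∀ z, GoodEnd (shift x ω) (Bx 0 m) (Bx 0 (n + 1)) (Bx 0 n) z →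
      GoodEnd ω (BxA x m) (BxA x (n + 1)) (BxA x n) (z + x) := by
    rintro z ⟨h0, w, u, h1, h2, h3, h4, h5⟩
    exact ⟨fun h => h0 ((mm _ _).1 h), w + x, u + x, f _ _ h1, (mm _ _).2 h2,
      fun h => h3 ((mm _ _).1 h), (mm _ _).2 h4, stp_shift.1 h5⟩
  exact ⟨z₁ + x, z₂ + x, z₃ + x, g _ g1, g _ g2, g _ g3, fun h => n1 (b _ _ h),
    fun h => n2 (b _ _ h), fun h => n3 (b _ _ h)⟩

/-! ## Part 8: counting trifurcations -/

lemma openBox_conn_zero {ω : Cfg} {m : ℤ} (h : ω ∈ OpenBox m) : ∀ (d : ℕ) (v : V2), v ∈ Bx 0 m →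
    |v.1| + |v.2| = d → ConnIn (Stp ω) (Bx 0 m) v 0 := by
  intro d
  induction d with
  | zero =>
    rintro ⟨a, b⟩ - hd
    have ha := abs_nonneg a
    have hb := abs_nonneg b
    have h1 : a = 0 := abs_eq_zero.1 (by simp at hd; omega)
    have h2 : b = 0 := abs_eq_zero.1 (by simp at hd; omega)
    subst h1 h2
    exact Relation.ReflTransGen.refl
  | succ d ih =>
    rintro ⟨a, b⟩ hv hd
    simp only [mem_Bx] at hv
    simp only at hd
    push_cast at hd
    have step : ∀ (e : E2), insideE (Bx 0 m) e → ∀ u : V2, (((a, b) = e.1 ∧ u = tgt e) ∨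
        (u = e.1 ∧ (a, b) = tgt e)) → |u.1| + |u.2| = d → ConnIn (Stp ω) (Bx 0 m) (a, b) u := by
      rintro e he u hu -
      refine ConnIn.single (stp_iff.2 ⟨e, h e he, hu⟩) ?_ ?_
      · rcases hu with ⟨h1, h2⟩ | ⟨h1, h2⟩
        · rw [h1]; exact he.1
        · rw [h2]; exact he.2
      · rcases hu with ⟨h1, h2⟩ | ⟨h1, h2⟩
        · rw [h2]; exact he.2
        · rw [h1]; exact he.1
    have fin : ∀ (e : E2), insideE (Bx 0 m) e → ∀ u : V2, (((a, b) = e.1 ∧ u = tgt e) ∨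
        (u = e.1 ∧ (a, b) = tgt e)) → |u.1| + |u.2| = d → ConnIn (Stp ω) (Bx 0 m) (a, b) 0 := by
      intro e he u hu hd'
      have h1 := step e he u hu hd'
      exact h1.trans (ih u (h1.mem (by simpa [mem_Bx] using hv)) hd')
    rcases lt_trichotomy a 0 with ha | ha | ha
    · refine fin ((a, b), false) ⟨?_, ?_⟩ (a + 1, b) (Or.inl ⟨rfl, rfl⟩) ?_
      · simp only [mem_Bx]; omega
      · simp only [mem_Bx, tgt]; simp; omega
      · simp only [abs] at *; omega
    · rcases lt_trichotomy b 0 with hb | hb | hb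
      · refine fin ((a, b), true) ⟨?_, ?_⟩ (a, b + 1) (Or.inl ⟨rfl, rfl⟩) ?_
        · simp only [mem_Bx]; omega
        · simp only [mem_Bx, tgt]; simp; omega
        · simp only [abs] at *; omega
      · simp [ha, hb] at hd; omega
      · refine fin ((a, b - 1), true) ⟨?_, ?_⟩ (a, b - 1) (Or.inr ⟨rfl, by simp [tgt]⟩) ?_
        · simp only [mem_Bx]; omega
        · simp only [mem_Bx, tgt]; simp; omega
        · simp only [abs] at *; omega
    · refine fin ((a - 1, b), false) ⟨?_, ?_⟩ (a - 1, b) (Or.inr ⟨rfl, by simp [tgt]⟩) ?_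
      · simp only [mem_Bx]; omega
      · simp only [mem_Bx, tgt]; simp; omega
      · simp only [abs] at *; omega

lemma openBox_conn {ω : Cfg} {m : ℤ} (h : ω ∈ OpenBox m) {u v : V2} (hu : u ∈ Bx 0 m)
    (hv : v ∈ Bx 0 m) : ConnIn (Stp ω) (Bx 0 m) u v := by
  have h1 := openBox_conn_zero h (|u.1| + |u.2|).toNat u hu (by
    rw [Int.toNat_of_nonneg]; positivity)
  have h2 := openBox_conn_zero h (|v.1| + |v.2|).toNat v hv (by
    rw [Int.toNat_of_nonneg]; positivity)
  exact h1.trans (h2.symm Stp.symm)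

/-- the boundary of the box -/
noncomputable def bdBox (N : ℕ) : Finset V2 :=
  (Finset.Icc (-N : ℤ) N ×ˢ {(N : ℤ), -(N : ℤ)}) ∪ ({(N : ℤ), -(N : ℤ)} ×ˢ Finset.Icc (-N : ℤ) N)

lemma bdBox_card (N : ℕ) : (bdBox N).card ≤ 4 * (2 * N + 1) := by
  unfold bdBox
  refine (Finset.card_union_le _ _).trans ?_
  rw [Finset.card_product, Finset.card_product]
  have h1 : ({(N : ℤ), -(N : ℤ)} : Finset ℤ).card ≤ 2 := Finset.card_le_two
  have h2 : (Finset.Icc (-N : ℤ) N).card = 2 * N + 1 := by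
    rw [Int.card_Icc]; omega
  rw [h2]
  nlinarith

/-- the grid of centers -/
def ctr (m : ℕ) (i : ℤ × ℤ) : V2 := ((2 * m + 1) * i.1, (2 * m + 1) * i.2)

/-- the index set -/
noncomputable def grid (K : ℕ) : Finset (ℤ × ℤ) := Finset.Icc (-K : ℤ) K ×ˢ Finset.Icc (-K : ℤ) K

lemma grid_card (K : ℕ) : (grid K).card = (2 * K + 1) ^ 2 := by
  rw [grid, Finset.card_product, Int.card_Icc]
  have : ((K : ℤ) + 1 - -K).toNat = 2 * K + 1 := by omega
  rw [this]; ring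

lemma coord_disj {m a b t : ℤ} (h1 : -m ≤ t - (2 * m + 1) * a)
    (h2 : t - (2 * m + 1) * a ≤ m) (h3 : -m ≤ t - (2 * m + 1) * b)
    (h4 : t - (2 * m + 1) * b ≤ m) : a = b := by
  have hm : 0 ≤ m := by linarith
  rcases lt_trichotomy a b with h | h | h
  · nlinarith
  · exact h
  · nlinarith

lemma coord_bd {m a K : ℤ} (hm : 0 ≤ m) (h1 : -K ≤ a) (h2 : a ≤ K) :
    -((2 * m + 1) * K) ≤ (2 * m + 1) * a ∧ (2 * m + 1) * a ≤ (2 * m + 1) * K := by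
  constructor <;> nlinarith

open Classical in
lemma count_le (m K : ℕ) (ω : Cfg) :
    ((grid K).filter (fun i => shift (ctr m i) ω ∈
      Tri0 m ((2 * ((2 * m + 1) * (K + 1)) : ℕ) : ℤ) ∩ OpenBox m)).card ≤
      4 * (2 * ((2 * m + 1) * (K + 1)) + 1) := by
  set N : ℕ := (2 * m + 1) * (K + 1) with hN
  have hNz : (N : ℤ) = (2 * m + 1) * K + (2 * m + 1) := by rw [hN]; push_cast; ring
  have hm : (0 : ℤ) ≤ m := by simp
  refine le_trans ?_ (bdBox_card N)
  have bd : ∀ i ∈ grid K, -((2 * m + 1) * K : ℤ) ≤ (ctr m i).1 ∧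
      (ctr m i).1 ≤ (2 * m + 1) * K ∧ -((2 * m + 1) * K : ℤ) ≤ (ctr m i).2 ∧
      (ctr m i).2 ≤ (2 * m + 1) * K := by
    intro i hi
    simp only [grid, Finset.mem_product, Finset.mem_Icc] at hi
    have h1 := coord_bd hm hi.1.1 hi.1.2
    have h2 := coord_bd hm hi.2.1 hi.2.2
    exact ⟨h1.1, h1.2, h2.1, h2.2⟩
  have mB : ∀ x v (r : ℤ), v ∈ BxA x r ↔ -r ≤ v.1 - x.1 ∧ v.1 - x.1 ≤ r ∧
      -r ≤ v.2 - x.2 ∧ v.2 - x.2 ≤ r := by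
    intro x v r; simp [BxA, mem_Bx]
  have sB : ∀ i ∈ grid K, ∀ v ∈ BxA (ctr m i) m, v ∈ Bx 0 ((N : ℤ) - 1) := by
    intro i hi v hv
    have := bd i hi
    rw [mB] at hv
    rw [mem_Bx]
    omega
  refine count_trifurcations (G := StpD ω (Bx 0 N)) (rk := Encodable.encode)
    (fun a b h => ⟨h.1.symm, h.2.2, h.2.1⟩) _ Encodable.encode_injective (bdBox N)
    (fun i => BxA (ctr m i) m) ?_ ?_ ?_
  · intro i j hij
    rw [Set.disjoint_left]
    intro v h1 h2
    rw [mB] at h1 h2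
    simp only [ctr] at h1 h2
    exact hij (Prod.ext (coord_disj h1.1 h1.2.1 h2.1 h2.2.1)
      (coord_disj h1.2.2.1 h1.2.2.2 h2.2.2.1 h2.2.2.2))
  · intro i hi a ha b hb
    rw [Finset.mem_filter] at hi
    have h1 := openBox_conn hi.2.2 ha hb
    have h2 := h1.map (G' := Stp ω) (S' := BxA (ctr m i) m) (· + ctr m i)
      (fun a b h => stp_shift.1 h) (fun a ha => by simpa [BxA] using ha)
    simp only [sub_add_cancel] at h2
    refine h2.mono (fun a b ha hb h => ⟨h, ?_, ?_⟩) subset_rfl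
    · exact Bx_mono (by omega) (sB i hi.1 a ha)
    · exact Bx_mono (by omega) (sB i hi.1 b hb)
  · intro i hi
    rw [Finset.mem_filter] at hi
    have := bd i hi.1
    refine tri_truncate ?_ ?_ ?_ ?_ ?_ ?_ (tri_shift hi.2.1)
    · intro v hv
      rw [mem_Bx] at hv
      rw [mB]
      push_cast
      omega
    · intro v hv
      rw [mem_Bx] at hv
      rw [mB]
      push_cast
      omega
    · intro u hu w hw
      have := stp_Bx (sB i hi.1 u hu) hw.symm
      simpa using this
    · exact fun v hv => Bx_mono (by omega) (sB i hi.1 v hv)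
    · intro w hw u hu h
      obtain ⟨x, y⟩ := w
      obtain ⟨x', y'⟩ := u
      simp only [mem_Bx, Stp, Prod.mk.injEq, bdBox, Finset.mem_union, Finset.mem_product,
        Finset.mem_Icc, Finset.mem_insert, Finset.mem_singleton] at *
      omega
    · intro z hz hz'
      have := sB i hi.1 z hz'
      simp only [mem_Bx, bdBox, Finset.mem_union, Finset.mem_product,
        Finset.mem_Icc, Finset.mem_insert, Finset.mem_singleton] at *
      omega

lemma mu_shift (x : V2) {S : Set Cfg} (hS : MeasurableSet S) : mu {ω | shift x ω ∈ S} = mu S := by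
  refine mu_reindex (fun e => (e.1 + x, e.2)) ?_ hS
  rintro ⟨a, b⟩ ⟨c, d⟩ h
  simpa using h

lemma measurable_shift (x : V2) : Measurable (shift x) :=
  measurable_pi_iff.2 fun e => measurable_pi_apply (e.1 + x, e.2)

open Classical in
lemma sum_bound (m K : ℕ) :
    ((2 * K + 1) ^ 2 : ℕ) * mu (Tri0 m ((2 * ((2 * m + 1) * (K + 1)) : ℕ) : ℤ) ∩ OpenBox m) ≤
      ((4 * (2 * ((2 * m + 1) * (K + 1)) + 1) : ℕ) : ℝ≥0∞) := by
  set T : Set Cfg := Tri0 m ((2 * ((2 * m + 1) * (K + 1)) : ℕ) : ℤ) ∩ OpenBox m with hT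
  have hmn : (m : ℤ) ≤ ((2 * ((2 * m + 1) * (K + 1)) : ℕ) : ℤ) := by
    have : m ≤ 2 * ((2 * m + 1) * (K + 1)) := by nlinarith
    exact_mod_cast this
  have hTm : MeasurableSet T :=
    ((tri_dep m _ hmn).measurable
      ((touchE_finite (Bx_finite 0 _)).subset sdiff_subset)).inter
      ((openBox_dep m).measurable (insideE_finite m))
  have h1 : ∀ i, mu {ω | shift (ctr m i) ω ∈ T} = mu T := fun i => mu_shift _ hTm
  have hm : ∀ i, MeasurableSet {ω | shift (ctr m i) ω ∈ T} := fun i => measurable_shift _ hTm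
  calc (((2 * K + 1) ^ 2 : ℕ) : ℝ≥0∞) * mu T
      = ∑ i ∈ grid K, mu {ω | shift (ctr m i) ω ∈ T} := by
        rw [Finset.sum_congr rfl (fun i _ => h1 i), Finset.sum_const, grid_card, nsmul_eq_mul]
    _ = ∑ i ∈ grid K, ∫⁻ ω, ({ω | shift (ctr m i) ω ∈ T}.indicator 1 ω) ∂mu := by
        refine Finset.sum_congr rfl fun i _ => ?_
        rw [lintegral_indicator_one (hm i)]
    _ = ∫⁻ ω, ∑ i ∈ grid K, ({ω | shift (ctr m i) ω ∈ T}.indicator 1 ω) ∂mu := by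
        rw [lintegral_finsetSum]
        exact fun i _ => measurable_one.indicator (hm i)
    _ ≤ ∫⁻ _, ((4 * (2 * ((2 * m + 1) * (K + 1)) + 1) : ℕ) : ℝ≥0∞) ∂mu := by
        refine lintegral_mono fun ω => ?_
        have := count_le m K ω
        rw [Finset.card_filter] at this
        refine le_trans (le_of_eq ?_) (Nat.cast_le.2 this)
        push_cast
        refine Finset.sum_congr rfl fun i _ => ?_
        simp [Set.indicator_apply, hT]
    _ = _ := by simp

lemma mu_perc : mu Perc = 0 := by
  by_contra hpos
  obtain ⟨m, c, hc, h⟩ := tri_open_ge hpos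
  have key : ∀ K : ℕ, (((2 * K + 1) ^ 2 : ℕ) : ℝ≥0∞) * c ≤
      ((4 * (2 * ((2 * m + 1) * (K + 1)) + 1) : ℕ) : ℝ≥0∞) := by
    intro K
    refine le_trans ?_ (sum_bound m K)
    gcongr
    exact h _ (by nlinarith)
  have key2 : ∀ K : ℕ, ((K : ℕ) : ℝ≥0∞) * c ≤ ((4 * (2 * (2 * m + 1) + 1) : ℕ) : ℝ≥0∞) := by
    intro K
    have h1 : (((K + 1 : ℕ) : ℝ≥0∞)) * (((K : ℕ) : ℝ≥0∞) * c) ≤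
        ((K + 1 : ℕ) : ℝ≥0∞) * ((4 * (2 * (2 * m + 1) + 1) : ℕ) : ℝ≥0∞) := by
      calc (((K + 1 : ℕ) : ℝ≥0∞)) * (((K : ℕ) : ℝ≥0∞) * c)
          = (((K + 1) * K : ℕ) : ℝ≥0∞) * c := by push_cast; ring
        _ ≤ (((2 * K + 1) ^ 2 : ℕ) : ℝ≥0∞) * c := by
          gcongr; nlinarith
        _ ≤ _ := key K
        _ ≤ (((K + 1) * (4 * (2 * (2 * m + 1) + 1)) : ℕ) : ℝ≥0∞) := by
          refine Nat.cast_le.2 ?_; nlinarith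
        _ = _ := by push_cast; ring
    exact (ENNReal.mul_le_mul_iff_right (by simp) (by simp)).1 h1
  obtain ⟨K, hK⟩ := ENNReal.exists_nat_mul_gt hc (b := ((4 * (2 * (2 * m + 1) + 1) : ℕ) : ℝ≥0∞))
    (ENNReal.natCast_ne_top _)
  exact absurd (key2 K) (not_le.2 hK)

/-! ## Part 9: projection of the slab -/

/-- projection of slab configurations to the plane -/
noncomputable def proj (k : ℕ) (ω : Config) : Cfg := fun e =>
  decide (∃ z : Fin (k + 1), ω (liftEdge (e, (z : ℕ))) = true)

lemma measurable_proj (k : ℕ) : Measurable (proj k) := by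
  refine measurable_pi_iff.2 fun e => measurable_to_bool ?_
  have : (fun ω => proj k ω e) ⁻¹' {true} =
      ⋃ z : Fin (k + 1), {ω : Config | ω (liftEdge (e, (z : ℕ))) = true} := by
    ext ω; simp [proj]
  rw [this]
  exact MeasurableSet.iUnion fun z =>
    measurableSet_eq_fun (measurable_pi_apply _) measurable_const

lemma proj_open {k : ℕ} {ω : Config} {x y z : ℤ} (d : Bool) (h0 : 0 ≤ z) (h1 : z ≤ k)
    (h : ω ((x, y, z), if d then 1 else 0) = true) : proj k ω ((x, y), d) = true := by
  simp only [proj, decide_eq_true_eq]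
  refine ⟨⟨z.toNat, by omega⟩, ?_⟩
  simp only [liftEdge]
  rw [Int.toNat_of_nonneg h0]
  exact h

lemma edge_proj {k : ℕ} {ω : Config} {u v : Vtx} {i : Fin 3} (h : v = u + dvec i)
    (he : IsEdge k (u, i)) (ho : ω (u, i) = true) :
    (u.1, u.2.1) = (v.1, v.2.1) ∨ Stp (proj k ω) (u.1, u.2.1) (v.1, v.2.1) := by
  obtain ⟨x, y, z⟩ := u
  obtain ⟨⟨h0, h1⟩, -⟩ := he
  simp only at h0 h1
  subst h
  fin_cases i
  · right
    exact Or.inl ⟨by simp [dvec], proj_open false h0 h1 (by simpa using ho)⟩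
  · right
    exact Or.inr (Or.inr (Or.inl ⟨by simp [dvec], proj_open true h0 h1 (by simpa using ho)⟩))
  · left
    simp [dvec]

lemma conn_proj {k : ℕ} {ω : Config} {u v : Vtx} (h : Relation.ReflTransGen (OpenAdj k ω) u v) :
    ConnIn (Stp (proj k ω)) univ (u.1, u.2.1) (v.1, v.2.1) := by
  induction h with
  | refl => exact Relation.ReflTransGen.refl
  | tail _ h ih =>
    obtain ⟨i, ⟨h1, h2, h3⟩ | ⟨h1, h2, h3⟩⟩ := h
    · rcases edge_proj h1 h2 h3 with h | h
      · rw [← h]; exact ih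
      · exact ih.trans (ConnIn.single h (mem_univ _) (mem_univ _))
    · rcases edge_proj h1 h2 h3 with h | h
      · rw [h]; exact ih
      · exact ih.trans (ConnIn.single h.symm (mem_univ _) (mem_univ _))

lemma inSlab_of_conn {k : ℕ} {ω : Config} {v : Vtx}
    (h : Relation.ReflTransGen (OpenAdj k ω) 0 v) : InSlab k v := by
  induction h with
  | refl => simp [InSlab]
  | tail _ h _ =>
    obtain ⟨i, ⟨h1, h2, h3⟩ | ⟨h1, h2, h3⟩⟩ := h
    · rw [h1]; exact h2.2
    · exact h2.1

lemma perc_of_infinite {k : ℕ} {ω : Config} (h : (cluster k ω 0).Infinite) :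
    proj k ω ∈ Perc := by
  simp only [Perc, LongArm, mem_iInter]
  intro n _
  have : ∃ v ∈ cluster k ω 0, ((v.1, v.2.1) : V2) ∉ Bx 0 n := by
    by_contra hcon
    push Not at hcon
    refine h (((Set.finite_Icc (-(n : ℤ)) n).prod ((Set.finite_Icc (-(n : ℤ)) n).prod
      (Set.finite_Icc (0 : ℤ) k))).subset ?_)
    rintro ⟨x, y, z⟩ hv
    have h1 := hcon _ hv
    have h2 := inSlab_of_conn hv
    simp only [mem_Bx, InSlab] at h1 h2
    simp only [mem_prod, mem_Icc]
    omega
  obtain ⟨v, hv, hn⟩ := this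
  refine arm_all_of_conn (Bx_mono (by simp)) ?_ hn (conn_proj hv)
  simp [mem_Bx]

lemma perc_incr : Incr Perc := by
  intro ω ω' he h
  simp only [Perc, LongArm, mem_iInter] at *
  exact fun n hn => arm_incr _ _ _ _ ω ω' he (h n hn)

lemma theta_le (k : ℕ) (p q : ℝ) (hp : p ≤ pCrit k) : theta k p q ≤ mu Perc := by
  have hP : MeasurableSet Perc := longArm_measurable 0 0
  have hW : MeasurableSet (proj k ⁻¹' Perc) := measurable_proj k hP
  have hs : Measurable (fun (x : ℝ) (e : EdgeIdx) =>
      decide (unifSample (Encodable.encode e) x < if e.2 = 2 then q else p)) := by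
    refine measurable_pi_iff.2 fun e => measurable_to_bool ?_
    have : (fun x => decide (unifSample (Encodable.encode e) x < if e.2 = 2 then q else p)) ⁻¹'
        {true} = {x | unifSample (Encodable.encode e) x < if e.2 = 2 then q else p} := by
      ext x; simp
    rw [this]
    exact measurableSet_lt (measurable_unifSample _) measurable_const
  calc theta k p q ≤ slabMeasure k p q (proj k ⁻¹' Perc) :=
        measure_mono fun ω hω => perc_of_infinite hω
    _ = leb _ := Measure.map_apply hs hW
    _ ≤ leb (collapsed k (pCrit k) ⁻¹' Perc) := by
        refine measure_mono fun x hx => ?_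
        refine perc_incr _ _ (fun e he => ?_) hx
        simp only [proj, decide_eq_true_eq] at he
        simp only [collapsed, decide_eq_true_eq]
        obtain ⟨z, hz⟩ := he
        refine ⟨z, lt_of_lt_of_le hz ?_⟩
        have : (liftEdge (e, (z : ℕ))).2 ≠ 2 := by
          simp only [liftEdge]
          split_ifs <;> decide
        rw [if_neg this]
        exact hp
    _ = mu Perc := by
        rw [← map_collapsed k, Measure.map_apply (measurable_collapsed k _) hP]

/-- If `p ≤ p_k` then `θ(p,q) = 0` for every `q ∈ [0,1]`. -/
theorem theta_eq_zero_of_le_pCrit (k : ℕ) (p q : ℝ)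
    (hp0 : 0 ≤ p) (hp : p ≤ pCrit k) (hq : q ∈ Set.Icc (0 : ℝ) 1) :
    theta k p q = 0 := by
  rw [← nonpos_iff_eq_zero, ← mu_perc]
  exact theta_le k p q hp

end AnisoSlab
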